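/- arXiv:math/0612591 — 2 statements merged into one kernel-verified Lean document; each statement's English description precedes it below -/
import Mathlib

section
/- For every n ≥ 1 there is a homeomorphism G from the cyclohedron Cycl_n (the closure of β_n(Δ^n)) onto the closure of γ'_n(Δ^n) in [0,1]^{T_n} × [0,+∞]^{P'_n}, satisfying G ∘ β_n = γ'_n on Δ^n. (Proposition 8.1 of the paper, which moreover asserts the identification is a diffeomorphism of manifolds with corners.) -/
open scoped ENNReal

/-- The open configuration space `Δ^n = {0 < t 1 < … < t n < 1}` of `n` points in `(0,1)`. -/
def openSimplex (n : ℕ) : Set (Fin n → ℝ) :=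
  {t | (∀ i j : Fin n, i < j → t i < t j) ∧ (∀ i, 0 < t i) ∧ ∀ i, t i < 1}

/-- Extension of a configuration `t : Fin n → ℝ` by the boundary conventions
`t 0 = 0` and `t (n+1) = 1`, giving a function on `Fin (n+2)`. -/
def ext01 {n : ℕ} (t : Fin n → ℝ) : Fin (n + 2) → ℝ :=
  Fin.cons 0 (Fin.snoc t 1)

/-- Extension of a configuration `t : Fin n → ℝ` by the convention `t 0 = 0` only,
giving a function on `Fin (n+1)`. -/
def ext0 {n : ℕ} (t : Fin n → ℝ) : Fin (n + 1) → ℝ :=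
  Fin.cons 0 t

/-- The index set `T_n` of triples `0 ≤ i < j < k ≤ n+1`. -/
abbrev TriIdx (n : ℕ) : Type :=
  {p : Fin (n + 2) × Fin (n + 2) × Fin (n + 2) // p.1 < p.2.1 ∧ p.2.1 < p.2.2}

/-- The map `α_n : Δ^n → [0,1]^{T_n}`, `s_{ijk} = (t_j − t_i)/(t_k − t_i)`
(with `t_0 = 0`, `t_{n+1} = 1`), whose image's closure is the associahedron. -/
noncomputable def alphaMap (n : ℕ) (t : Fin n → ℝ) : TriIdx n → ℝ := fun q =>
  (ext01 t q.1.2.1 - ext01 t q.1.1) / (ext01 t q.1.2.2 - ext01 t q.1.1)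

/-- The `n`-dimensional associahedron: the closure of `α_n(Δ^n)`. -/
noncomputable def Assoc (n : ℕ) : Set (TriIdx n → ℝ) :=
  closure (alphaMap n '' openSimplex n)

/-- The index set `S_n` of triples of pairwise distinct elements of `{0, 1, …, n}`. -/
abbrev TripleIdx (n : ℕ) : Type :=
  {p : Fin (n + 1) × Fin (n + 1) × Fin (n + 1) // p.1 ≠ p.2.1 ∧ p.1 ≠ p.2.2 ∧ p.2.1 ≠ p.2.2}

/-- `s̃_{kℓm}(t) = |sin π(t_ℓ − t_k)| / |sin π(t_m − t_k)| ∈ [0, +∞]`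
(with the convention `t_0 = 0`). -/
noncomputable def sTilde (n : ℕ) (t : Fin n → ℝ) : TripleIdx n → ℝ≥0∞ := fun q =>
  ENNReal.ofReal |Real.sin (Real.pi * (ext0 t q.1.2.1 - ext0 t q.1.1))| /
    ENNReal.ofReal |Real.sin (Real.pi * (ext0 t q.1.2.2 - ext0 t q.1.1))|

/-- The map `β_n : Δ^n → Δ̄^n × [0,+∞]^{S_n}`. -/
noncomputable def betaMap (n : ℕ) (t : Fin n → ℝ) : (Fin n → ℝ) × (TripleIdx n → ℝ≥0∞) :=
  (t, sTilde n t)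

/-- The `n`-dimensional cyclohedron: the closure of `β_n(Δ^n)`. -/
noncomputable def Cycl (n : ℕ) : Set ((Fin n → ℝ) × (TripleIdx n → ℝ≥0∞)) :=
  closure (betaMap n '' openSimplex n)

/-- The index set `P\'_n` of pairs `1 ≤ i < j ≤ n`. -/
abbrev PairIdx' (n : ℕ) : Type := {p : ℕ × ℕ // 1 ≤ p.1 ∧ p.1 < p.2 ∧ p.2 ≤ n}

/-- The map `γ\'_n : Δ^n → [0,1]^{T_n} × [0,+∞]^{P\'_n}`, with components
`s_{ijk}(t) = (t_j − t_i)/(t_k − t_i)` and `r_{ij}(t) = t_i/(1 − t_j)` (with the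
conventions `t_0 = 0`, `t_{n+1} = 1`). -/
noncomputable def gammaPrimeMap (n : ℕ) (t : Fin n → ℝ) :
    (TriIdx n → ℝ) × (PairIdx' n → ℝ≥0∞) :=
  (alphaMap n t,
   fun p => ENNReal.ofReal (ext01 t ⟨p.1.1, by obtain ⟨h1, h2, h3⟩ := p.2; omega⟩) /
     ENNReal.ofReal (1 - ext01 t ⟨p.1.2, by obtain ⟨h1, h2, h3⟩ := p.2; omega⟩))

/-!
Two maps from a set to regular spaces have homeomorphic image closures, compatibly with the maps,
as soon as they converge along the same filters. For `β_n` and `γ'_n`, convergence along a filter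
on `Δ^n` means in both cases that the configuration `t` converges and that the lengths of any two
consecutive arcs between three of its points on the circle `ℝ / ℤ` have a ratio converging in
`[0, ∞]`. For `γ'_n` this holds because `x / y` converges in `[0, ∞]` if and only if `x / (x + y)`
converges in `[0, 1]`. For `β_n`, note that `sin (π r)` is `r (1 - r)` times a positive continuous
function of `r ∈ [0, 1]`, and that `x (1 - x) / (y (1 - y)) = x (y + z) / (y (z + x))` if `x`, `y`
and `z` are the lengths of the arcs cut out by three points.
-/

open Filter Topology

section ClosureHomeomorph

variable {X A B : Type*} [TopologicalSpace A] [TopologicalSpace B]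

theorem exists_continuous_extension_of_denseRange [T3Space B] {i : X → A} {j : X → B}
    (hi : DenseRange i)
    (h : ∀ F : Filter X, F.NeBot → (∃ a, Tendsto i F (𝓝 a)) → ∃ b, Tendsto j F (𝓝 b)) :
    ∃ f : A → B, Continuous f ∧ ∀ x, f (i x) = j x := by
  let _ : TopologicalSpace X := .induced i inferInstance
  have di : IsDenseInducing i := ⟨⟨rfl⟩, hi⟩
  have hj (a : A) : ∃ b, Tendsto j (comap i (𝓝 a)) (𝓝 b) :=
    h _ (di.comap_nhds_neBot a) ⟨a, tendsto_comap⟩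
  refine ⟨di.extend j, di.continuous_extend hj, fun x => ?_⟩
  obtain ⟨b, hb⟩ := hj (i x)
  exact di.extend_eq_at' b (di.nhds_eq_comap x ▸ hb)

theorem exists_homeomorph_of_denseRange [T3Space A] [T3Space B] {i : X → A} {j : X → B}
    (hi : DenseRange i) (hj : DenseRange j)
    (h : ∀ F : Filter X, F.NeBot → ((∃ a, Tendsto i F (𝓝 a)) ↔ ∃ b, Tendsto j F (𝓝 b))) :
    ∃ G : A ≃ₜ B, ∀ x, G (i x) = j x := by
  obtain ⟨f, hf, hfi⟩ := exists_continuous_extension_of_denseRange hi fun F hF => (h F hF).1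
  obtain ⟨g, hg, hgj⟩ := exists_continuous_extension_of_denseRange hj fun F hF => (h F hF).2
  have hgf : g ∘ f = id := hi.equalizer (hg.comp hf) continuous_id (by ext x; simp [hfi, hgj])
  have hfg : f ∘ g = id := hj.equalizer (hf.comp hg) continuous_id (by ext x; simp [hfi, hgj])
  exact ⟨⟨⟨f, g, congr_fun hgf, congr_fun hfg⟩, hf, hg⟩, hfi⟩

/-- The map `s → closure (β '' s)` induced by `β`. -/
def toClosureImage (β : X → A) (s : Set X) (x : s) : closure (β '' s) :=
  ⟨β x, subset_closure (Set.mem_image_of_mem β x.2)⟩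

theorem denseRange_toClosureImage (β : X → A) (s : Set X) : DenseRange (toClosureImage β s) := by
  have himage : (↑) '' Set.range (toClosureImage β s) = β '' s :=
    (Set.range_comp _ _).symm.trans (Set.image_eq_range β s).symm
  rw [denseRange_iff_closure_range, IsInducing.subtypeVal.closure_eq_preimage_closure_image,
    himage, Subtype.coe_preimage_self]

theorem exists_tendsto_toClosureImage_iff {β : X → A} {s : Set X} {F : Filter s} [F.NeBot] :
    (∃ a, Tendsto (toClosureImage β s) F (𝓝 a)) ↔ ∃ a, Tendsto β (map (↑) F) (𝓝 a) := by
  simp only [tendsto_map'_iff]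
  refine ⟨fun ⟨a, ha⟩ => ⟨a, tendsto_subtype_rng.1 ha⟩, fun ⟨a, ha⟩ => ?_⟩
  have hmem : a ∈ closure (β '' s) :=
    mem_closure_of_tendsto ha (.of_forall fun x => Set.mem_image_of_mem β x.2)
  exact ⟨⟨a, hmem⟩, tendsto_subtype_rng.2 ha⟩

theorem exists_homeomorph_closure_image [T3Space A] [T3Space B] {β : X → A} {γ : X → B}
    {s : Set X} (h : ∀ F : Filter X, F.NeBot → F ≤ 𝓟 s →
      ((∃ a, Tendsto β F (𝓝 a)) ↔ ∃ b, Tendsto γ F (𝓝 b))) :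
    ∃ G : ↥(closure (β '' s)) ≃ₜ ↥(closure (γ '' s)), ∀ x (hx : x ∈ s),
      G ⟨β x, subset_closure (Set.mem_image_of_mem _ hx)⟩ =
        ⟨γ x, subset_closure (Set.mem_image_of_mem _ hx)⟩ := by
  obtain ⟨G, hG⟩ := exists_homeomorph_of_denseRange
    (denseRange_toClosureImage β s) (denseRange_toClosureImage γ s) fun F _ => by
      rw [exists_tendsto_toClosureImage_iff, exists_tendsto_toClosureImage_iff]
      exact h _ inferInstance (by simp)
  exact ⟨G, fun x hx => hG ⟨x, hx⟩⟩

end ClosureHomeomorph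

section ExistsTendsto

variable {α : Type*} {F : Filter α}

theorem exists_tendsto_pi_nhds_iff {ι : Type*} {Y : ι → Type*} [∀ i, TopologicalSpace (Y i)]
    {f : α → ∀ i, Y i} :
    (∃ a, Tendsto f F (𝓝 a)) ↔ ∀ i, ∃ c, Tendsto (fun x => f x i) F (𝓝 c) := by
  simp only [tendsto_pi_nhds, Classical.skolem]

theorem exists_tendsto_prodMk_nhds_iff {A B : Type*} [TopologicalSpace A] [TopologicalSpace B]
    {f : α → A} {g : α → B} :
    (∃ a, Tendsto (fun x => (f x, g x)) F (𝓝 a)) ↔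
      (∃ a, Tendsto f F (𝓝 a)) ∧ ∃ b, Tendsto g F (𝓝 b) := by
  simp only [Prod.exists, Prod.tendsto_iff, exists_and_left, exists_and_right]

end ExistsTendsto

/-- Two real functions are comparable along a filter if they are eventually positive and their
quotient converges in `[0, ∞]`. -/
structure Comparable {α : Type*} (F : Filter α) (f g : α → ℝ) : Prop where
  left_pos : ∀ᶠ x in F, 0 < f x
  right_pos : ∀ᶠ x in F, 0 < g x
  exists_tendsto : ∃ c, Tendsto (fun x => ENNReal.ofReal (f x / g x)) F (𝓝 c)

namespace Comparable

variable {α : Type*} {F : Filter α} {f g h u v x y z : α → ℝ} {a b c : ℝ}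

theorem congr (hfg : Comparable F f g) (hu : f =ᶠ[F] u) (hv : g =ᶠ[F] v) : Comparable F u v where
  left_pos := by filter_upwards [hfg.left_pos, hu] with x hx hux using hux ▸ hx
  right_pos := by filter_upwards [hfg.right_pos, hv] with x hx hvx using hvx ▸ hx
  exists_tendsto := by
    obtain ⟨c, hc⟩ := hfg.exists_tendsto
    exact ⟨c, hc.congr' (by filter_upwards [hu, hv] with x hux hvx using by rw [hux, hvx])⟩

theorem refl (hf : ∀ᶠ x in F, 0 < f x) : Comparable F f f where
  left_pos := hf
  right_pos := hf
  exists_tendsto := ⟨1, tendsto_const_nhds.congr' <| by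
    filter_upwards [hf] with x hx
    rw [div_self hx.ne', ENNReal.ofReal_one]⟩

theorem symm (hfg : Comparable F f g) : Comparable F g f where
  left_pos := hfg.right_pos
  right_pos := hfg.left_pos
  exists_tendsto := by
    obtain ⟨c, hc⟩ := hfg.exists_tendsto
    refine ⟨c⁻¹, (tendsto_inv_iff.2 hc).congr' ?_⟩
    filter_upwards [hfg.left_pos, hfg.right_pos] with x hf hg
    rw [← ENNReal.ofReal_inv_of_pos (div_pos hf hg), inv_div]

theorem add_left (hf : Comparable F f h) (hg : Comparable F g h) : Comparable F (f + g) h where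
  left_pos := by filter_upwards [hf.left_pos, hg.left_pos] with x hx hy using add_pos hx hy
  right_pos := hf.right_pos
  exists_tendsto := by
    obtain ⟨c, hc⟩ := hf.exists_tendsto
    obtain ⟨d, hd⟩ := hg.exists_tendsto
    refine ⟨c + d, (hc.add hd).congr' ?_⟩
    filter_upwards [hf.left_pos, hg.left_pos, hf.right_pos] with x hfx hgx hhx
    rw [Pi.add_apply, add_div, ENNReal.ofReal_add (div_pos hfx hhx).le (div_pos hgx hhx).le]

theorem add_right (hg : Comparable F f g) (hh : Comparable F f h) : Comparable F f (g + h) :=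
  (hg.symm.add_left hh.symm).symm

theorem mul_of_tendsto_div (hfg : Comparable F f g) (hu : ∀ᶠ x in F, 0 < u x)
    (hv : ∀ᶠ x in F, 0 < v x) (huv : Tendsto (u / v) F (𝓝 c)) (hc : 0 < c) :
    Comparable F (u * f) (v * g) where
  left_pos := by filter_upwards [hu, hfg.left_pos] with x hx hy using mul_pos hx hy
  right_pos := by filter_upwards [hv, hfg.right_pos] with x hx hy using mul_pos hx hy
  exists_tendsto := by
    obtain ⟨d, hd⟩ := hfg.exists_tendsto
    refine ⟨_, (ENNReal.Tendsto.mul (ENNReal.tendsto_ofReal huv) (.inl (by simpa using hc)) hd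
      (.inr ENNReal.ofReal_ne_top)).congr' ?_⟩
    filter_upwards [hu, hv] with x hux hvx
    rw [Pi.mul_apply, Pi.mul_apply, mul_div_mul_comm, Pi.div_apply,
      ENNReal.ofReal_mul (div_pos hux hvx).le]

theorem mul_left (hfg : Comparable F f g) (hu : ∀ᶠ x in F, 0 < u x) :
    Comparable F (u * f) (u * g) :=
  hfg.mul_of_tendsto_div hu hu
    (tendsto_const_nhds.congr' (hu.mono fun _ hx => (div_self hx.ne').symm)) one_pos

theorem mul_iff_of_tendsto (hu : Tendsto u F (𝓝 a)) (ha : 0 < a) (hv : Tendsto v F (𝓝 b))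
    (hb : 0 < b) : Comparable F (u * f) (v * g) ↔ Comparable F f g := by
  have hu₀ := hu.eventually_const_lt ha
  have hv₀ := hv.eventually_const_lt hb
  refine ⟨fun h => ?_, fun h => h.mul_of_tendsto_div hu₀ hv₀ (hu.div hv hb.ne') (div_pos ha hb)⟩
  refine (h.mul_of_tendsto_div (u := u⁻¹) (v := v⁻¹) (hu₀.mono fun _ => inv_pos.2)
    (hv₀.mono fun _ => inv_pos.2) ((hu.inv₀ ha.ne').div (hv.inv₀ hb.ne') (inv_pos.2 hb).ne')
    (div_pos (inv_pos.2 ha) (inv_pos.2 hb))).congr ?_ ?_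
  · filter_upwards [hu₀] with x hx using inv_mul_cancel_left₀ hx.ne' _
  · filter_upwards [hv₀] with x hx using inv_mul_cancel_left₀ hx.ne' _

theorem of_tendsto (hf₀ : ∀ᶠ x in F, 0 < f x) (hg₀ : ∀ᶠ x in F, 0 < g x)
    (hf : Tendsto f F (𝓝 a)) (hg : Tendsto g F (𝓝 b)) (hab : a ≠ 0 ∨ b ≠ 0) :
    Comparable F f g := by
  rcases hab with ha | hb
  · exact symm ⟨hg₀, hf₀, _, ENNReal.tendsto_ofReal (hg.div hf ha)⟩
  · exact ⟨hf₀, hg₀, _, ENNReal.tendsto_ofReal (hf.div hg hb)⟩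

theorem iff_exists_tendsto_ofReal_div (hf : ∀ᶠ x in F, 0 < f x) (hg : ∀ᶠ x in F, 0 < g x) :
    Comparable F f g ↔
      ∃ c, Tendsto (fun x => ENNReal.ofReal (f x) / ENNReal.ofReal (g x)) F (𝓝 c) := by
  have hquot : (fun x => ENNReal.ofReal (f x / g x)) =ᶠ[F]
      fun x => ENNReal.ofReal (f x) / ENNReal.ofReal (g x) := by
    filter_upwards [hg] with x hx using ENNReal.ofReal_div_of_pos hx
  simp only [← tendsto_congr' hquot]
  exact ⟨exists_tendsto, fun h => ⟨hf, hg, h⟩⟩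

theorem iff_exists_tendsto_div_add (hf : ∀ᶠ x in F, 0 < f x) (hg : ∀ᶠ x in F, 0 < g x) :
    Comparable F f g ↔ ∃ c, Tendsto (f / (f + g)) F (𝓝 c) := by
  constructor
  · intro hfg
    obtain ⟨c, hc⟩ := hfg.symm.exists_tendsto
    have hlim : (1 + c)⁻¹ ≠ ⊤ := by simp
    refine ⟨_, ((ENNReal.tendsto_toReal hlim).comp
      (tendsto_inv_iff.2 (hc.const_add 1))).congr' ?_⟩
    filter_upwards [hf, hg] with x hx hy
    have hq : 0 < g x / f x := div_pos hy hx
    rw [Function.comp_apply, ← ENNReal.ofReal_one, ← ENNReal.ofReal_add zero_le_one hq.le,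
      ENNReal.toReal_inv, ENNReal.toReal_ofReal (by positivity), Pi.div_apply, Pi.add_apply,
      one_add_div hx.ne', inv_div]
  · rintro ⟨c, hc⟩
    have hcompl : 1 - f / (f + g) =ᶠ[F] g / (f + g) := by
      filter_upwards [hf, hg] with x hx hy
      simp only [Pi.sub_apply, Pi.one_apply, Pi.div_apply, Pi.add_apply]
      field_simp
      ring
    have hne : c ≠ 0 ∨ 1 - c ≠ 0 := by grind
    have hsum : ∀ᶠ x in F, 0 < (f + g) x := by filter_upwards [hf, hg] using fun _ => add_pos
    have hratio : Comparable F (f / (f + g)) (g / (f + g)) :=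
      of_tendsto (by filter_upwards [hf, hsum] using fun _ => div_pos)
        (by filter_upwards [hg, hsum] using fun _ => div_pos)
        hc ((hc.const_sub 1).congr' hcompl) hne
    refine (hratio.mul_left hsum).congr ?_ ?_
    · filter_upwards [hsum] with x hx using mul_div_cancel₀ _ hx.ne'
    · filter_upwards [hsum] with x hx using mul_div_cancel₀ _ hx.ne'

/-- Because `f / (f + (g + h)) = f / (f + g) * ((f + g) / (f + g + h))`. -/
theorem add_right_of_add_left (hfg : Comparable F f g) (hh : Comparable F (f + g) h) :
    Comparable F f (g + h) := by
  have hsum : ∀ᶠ x in F, 0 < (g + h) x := by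
    filter_upwards [hfg.right_pos, hh.right_pos] using fun _ => add_pos
  obtain ⟨c, hc⟩ := (iff_exists_tendsto_div_add hfg.left_pos hfg.right_pos).1 hfg
  obtain ⟨d, hd⟩ := (iff_exists_tendsto_div_add hh.left_pos hh.right_pos).1 hh
  refine (iff_exists_tendsto_div_add hfg.left_pos hsum).2 ⟨c * d, (hc.mul hd).congr' ?_⟩
  filter_upwards [hh.left_pos] with x hx
  rw [← add_assoc]
  exact div_mul_div_cancel₀ hx.ne'

theorem mul_add_of_pairwise (hxy : Comparable F x y) (hyz : Comparable F y z)
    (hzx : Comparable F z x) : Comparable F (x * (y + z)) (y * (z + x)) := by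
  have hxy_yz : Comparable F (x * y) (y * z) := mul_comm y x ▸ hzx.symm.mul_left hxy.right_pos
  have hxy_yx : Comparable F (x * y) (y * x) := mul_comm x y ▸ refl hxy_yz.left_pos
  have hxz_yx : Comparable F (x * z) (y * x) := mul_comm x y ▸ hyz.symm.mul_left hxy.left_pos
  have hxz_yz : Comparable F (x * z) (y * z) :=
    mul_comm z x ▸ mul_comm z y ▸ hxy.mul_left hyz.right_pos
  rw [mul_add, mul_add]
  exact (hxy_yz.add_right hxy_yx).add_left (hxz_yz.add_right hxz_yx)

theorem of_mul_one_sub (hx₀ : ∀ᶠ i in F, 0 < x i) (hy₀ : ∀ᶠ i in F, 0 < y i)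
    (hx : Tendsto x F (𝓝 a)) (hy : Tendsto y F (𝓝 b))
    (h : Comparable F (x * (1 - x)) (y * (1 - y))) : Comparable F x y := by
  by_cases hab : a = 0 ∧ b = 0
  · obtain ⟨rfl, rfl⟩ := hab
    have hx₁ : Tendsto (1 - x) F (𝓝 (1 - 0)) := hx.const_sub 1
    have hy₁ : Tendsto (1 - y) F (𝓝 (1 - 0)) := hy.const_sub 1
    rw [mul_comm x, mul_comm y] at h
    exact (mul_iff_of_tendsto hx₁ (by norm_num) hy₁ (by norm_num)).1 h
  · exact of_tendsto hx₀ hy₀ hx hy (not_and_or.1 hab)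

end Comparable

section Sine

open Real

theorem sin_pi_mul_eq_sinc_mul (r : ℝ) : sin (π * r) = π * sinc (π * r) * r := by
  rcases eq_or_ne r 0 with rfl | hr
  · simp
  · rw [sinc_of_ne_zero (mul_ne_zero pi_ne_zero hr)]
    field_simp

/-- The quotient `sin (π r) / (r (1 - r))`, extended continuously to `r = 0` and `r = 1`. The
formula comes from `1 / (r (1 - r)) = 1 / r + 1 / (1 - r)`. -/
noncomputable def sinPiQuotient (r : ℝ) : ℝ :=
  π * (sinc (π * r) + sinc (π * (1 - r)))

theorem sin_pi_mul_eq_sinPiQuotient_mul (r : ℝ) :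
    sin (π * r) = sinPiQuotient r * (r * (1 - r)) := by
  have hr := sin_pi_mul_eq_sinc_mul r
  have hr' : sin (π * r) = π * sinc (π * (1 - r)) * (1 - r) := by
    rw [← sin_pi_mul_eq_sinc_mul, mul_sub, mul_one, sin_pi_sub]
  calc sin (π * r) = (1 - r) * sin (π * r) + r * sin (π * r) := by ring
    _ = (1 - r) * (π * sinc (π * r) * r) + r * (π * sinc (π * (1 - r)) * (1 - r)) := by
        rw [← hr, ← hr']
    _ = sinPiQuotient r * (r * (1 - r)) := by rw [sinPiQuotient]; ring

theorem continuous_sinPiQuotient : Continuous sinPiQuotient := by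
  unfold sinPiQuotient
  fun_prop

theorem sin_pi_mul_pos {r : ℝ} (h₀ : 0 < r) (h₁ : r < 1) : 0 < sin (π * r) :=
  sin_pos_of_pos_of_lt_pi (mul_pos pi_pos h₀) (mul_lt_of_lt_one_right pi_pos h₁)

theorem sinPiQuotient_pos {r : ℝ} (hr : r ∈ Set.Icc 0 1) : 0 < sinPiQuotient r := by
  rcases hr.1.eq_or_lt with rfl | h₀
  · simp [sinPiQuotient, sinc_of_ne_zero pi_ne_zero, pi_pos]
  rcases hr.2.eq_or_lt with rfl | h₁
  · simp [sinPiQuotient, sinc_of_ne_zero pi_ne_zero, pi_pos]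
  refine pos_of_mul_pos_left ?_ (mul_pos h₀ (sub_pos.2 h₁)).le
  rw [← sin_pi_mul_eq_sinPiQuotient_mul]
  exact sin_pi_mul_pos h₀ h₁

theorem comparable_sin_pi_mul_iff {α : Type*} {F : Filter α} {x y : α → ℝ} {a b : ℝ}
    (hx : Tendsto x F (𝓝 a)) (ha : a ∈ Set.Icc 0 1)
    (hy : Tendsto y F (𝓝 b)) (hb : b ∈ Set.Icc 0 1) :
    Comparable F (fun i => sin (π * x i)) (fun i => sin (π * y i)) ↔
      Comparable F (x * (1 - x)) (y * (1 - y)) := by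
  simp only [sin_pi_mul_eq_sinPiQuotient_mul]
  exact Comparable.mul_iff_of_tendsto ((continuous_sinPiQuotient.tendsto a).comp hx)
    (sinPiQuotient_pos ha) ((continuous_sinPiQuotient.tendsto b).comp hy) (sinPiQuotient_pos hb)

end Sine

section Configurations

variable {n : ℕ} {t : Fin n → ℝ} {F : Filter (Fin n → ℝ)} {a b c : Fin (n + 1)}

theorem ext01_castSucc (t : Fin n → ℝ) (i : Fin (n + 1)) : ext01 t i.castSucc = ext0 t i := by
  rw [ext01, Fin.cons_snoc_eq_snoc_cons, Fin.snoc_castSucc, ext0]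

theorem ext01_last (t : Fin n → ℝ) : ext01 t (Fin.last (n + 1)) = 1 := by
  rw [ext01, Fin.cons_snoc_eq_snoc_cons, Fin.snoc_last]

theorem ext0_zero (t : Fin n → ℝ) : ext0 t 0 = 0 := rfl

theorem continuous_ext0 : Continuous (ext0 : (Fin n → ℝ) → Fin (n + 1) → ℝ) := by
  refine continuous_pi fun i => ?_
  cases i using Fin.cases with
  | zero => exact continuous_const
  | succ i => exact continuous_apply i

theorem strictMono_ext0 (ht : t ∈ openSimplex n) : StrictMono (ext0 t) := by
  intro i j hij
  cases j using Fin.cases with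
  | zero => exact absurd hij (Fin.not_lt_zero i)
  | succ j =>
    cases i using Fin.cases with
    | zero => exact ht.2.1 j
    | succ i => exact ht.1 i j (Fin.succ_lt_succ_iff.1 hij)

theorem ext0_mem_Ico (ht : t ∈ openSimplex n) (i : Fin (n + 1)) : ext0 t i ∈ Set.Ico 0 1 := by
  cases i using Fin.cases with
  | zero => exact ⟨le_rfl, one_pos⟩
  | succ i => exact ⟨(ht.2.1 i).le, ht.2.2 i⟩

/-- The length of the arc of the circle `ℝ / ℤ` that runs in the positive direction from the
`a`-th to the `b`-th point of the configuration `0 = t_0 < t_1 < ⋯ < t_n < 1`. -/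
noncomputable def arc (a b : Fin (n + 1)) (t : Fin n → ℝ) : ℝ :=
  ext0 t b - ext0 t a + if a ≤ b then 0 else 1

theorem arc_of_le (h : a ≤ b) (t : Fin n → ℝ) : arc a b t = ext0 t b - ext0 t a := by
  rw [arc, if_pos h, add_zero]

theorem arc_of_lt (h : b < a) (t : Fin n → ℝ) : arc a b t = ext0 t b - ext0 t a + 1 := by
  rw [arc, if_neg h.not_ge]

theorem continuous_arc (a b : Fin (n + 1)) : Continuous (arc a b) :=
  (((continuous_apply b).comp continuous_ext0).sub
    ((continuous_apply a).comp continuous_ext0)).add_const _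

theorem tendsto_arc (ht : F ≤ 𝓝 t) (a b : Fin (n + 1)) : Tendsto (arc a b) F (𝓝 (arc a b t)) :=
  ((continuous_arc a b).tendsto t).mono_left ht

theorem arc_add_arc (h : sbtw a b c) : arc a b + arc b c = arc a c := by
  ext t
  rw [Pi.add_apply]
  rcases Fin.sbtw_iff.1 h with ⟨hab, hbc⟩ | ⟨hbc, hca⟩ | ⟨hca, hab⟩
  · rw [arc_of_le hab.le, arc_of_le hbc.le, arc_of_le (hab.trans hbc).le]
    ring
  · rw [arc_of_lt (hbc.trans hca), arc_of_le hbc.le, arc_of_lt hca]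
    ring
  · rw [arc_of_le hab.le, arc_of_lt (hca.trans hab), arc_of_lt hca]
    ring

theorem arc_eq_one_sub (h : a ≠ b) : arc a b = 1 - arc b a := by
  ext t
  rw [Pi.sub_apply, Pi.one_apply]
  rcases h.lt_or_gt with h | h
  · rw [arc_of_le h.le, arc_of_lt h]
    ring
  · rw [arc_of_lt h, arc_of_le h.le]
    ring

theorem arc_pos (ht : t ∈ openSimplex n) (h : a ≠ b) : 0 < arc a b t := by
  rcases h.lt_or_gt with h | h
  · rw [arc_of_le h.le]
    exact sub_pos.2 (strictMono_ext0 ht h)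
  · rw [arc_of_lt h]
    linarith [(ext0_mem_Ico ht a).2, (ext0_mem_Ico ht b).1]

theorem arc_lt_one (ht : t ∈ openSimplex n) (h : a ≠ b) : arc a b t < 1 := by
  rw [arc_eq_one_sub h]
  exact sub_lt_self 1 (arc_pos ht h.symm)

theorem eventually_arc_pos (hF : F ≤ 𝓟 (openSimplex n)) (h : a ≠ b) :
    ∀ᶠ t in F, 0 < arc a b t := by
  filter_upwards [le_principal_iff.1 hF] with t ht using arc_pos ht h

theorem arc_mem_Icc_of_le_nhds [F.NeBot] (hF : F ≤ 𝓟 (openSimplex n)) (ht : F ≤ 𝓝 t)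
    (h : a ≠ b) : arc a b t ∈ Set.Icc 0 1 := by
  refine isClosed_Icc.mem_of_tendsto (tendsto_arc ht a b) ?_
  filter_upwards [le_principal_iff.1 hF] with s hs using ⟨(arc_pos hs h).le, (arc_lt_one hs h).le⟩

theorem abs_sin_pi_mul_ext0_sub (ht : t ∈ openSimplex n) (h : a ≠ b) :
    |Real.sin (Real.pi * (ext0 t b - ext0 t a))| = Real.sin (Real.pi * arc a b t) := by
  have hpos := sin_pi_mul_pos (arc_pos ht h) (arc_lt_one ht h)
  rcases h.lt_or_gt with h | h
  · rw [arc_of_le h.le] at hpos ⊢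
    exact abs_of_pos hpos
  · rw [arc_of_lt h, mul_add, mul_one, Real.sin_add_pi] at hpos ⊢
    exact abs_of_neg (neg_pos.1 hpos)

/-- Any two consecutive arcs `a → b → c` cut out by three points of the configuration are
comparable: the condition through which the boundary behaviours of `β_n` and `γ'_n` are matched. -/
def ArcsComparable (F : Filter (Fin n → ℝ)) : Prop :=
  ∀ a b c : Fin (n + 1), sbtw a b c → Comparable F (arc a b) (arc b c)

theorem arcsComparable_iff_forall_lt :
    ArcsComparable F ↔
      (∀ a b c : Fin (n + 1), a < b → b < c → Comparable F (arc a b) (arc b c)) ∧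
      (∀ a b : Fin (n + 1), 0 < a → a < b → Comparable F (arc a b) (arc b 0)) ∧
      ∀ a b : Fin (n + 1), 0 < a → a < b → Comparable F (arc 0 a) (arc b 0) := by
  constructor
  · intro h
    exact ⟨fun a b c hab hbc => h a b c (Fin.sbtw_iff.2 (.inl ⟨hab, hbc⟩)),
      fun a b ha hab => h a b 0 (Fin.sbtw_iff.2 (.inr (.inr ⟨ha, hab⟩))),
      fun a b ha hab => (h b 0 a (Fin.sbtw_iff.2 (.inr (.inl ⟨ha, hab⟩)))).symm⟩
  · rintro ⟨hinner, hlast, hends⟩ a b c h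
    rcases Fin.sbtw_iff.1 h with ⟨hab, hbc⟩ | ⟨hbc, hca⟩ | ⟨hca, hab⟩
    · exact hinner a b c hab hbc
    · rcases (Fin.zero_le b).eq_or_lt with rfl | hb
      · exact (hends c a hbc hca).symm
      · have h₁ := (hinner 0 b c hb hbc).symm
        have h₂ := hends c a (hb.trans hbc) hca
        rw [← arc_add_arc (Fin.sbtw_iff.2 (.inl ⟨hb, hbc⟩)), add_comm] at h₂
        rw [← arc_add_arc (Fin.sbtw_iff.2 (.inr (.inl ⟨hb, hbc.trans hca⟩))), add_comm]
        exact (h₁.add_right_of_add_left h₂).symm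
    · rcases (Fin.zero_le c).eq_or_lt with rfl | hc
      · exact hlast a b hca hab
      · have h₁ := hlast a b (hc.trans hca) hab
        have h₂ := (hends c a hc hca).symm
        rw [← arc_add_arc (Fin.sbtw_iff.2 (.inr (.inr ⟨hc.trans hca, hab⟩)))] at h₂
        rw [← arc_add_arc (Fin.sbtw_iff.2 (.inr (.inl ⟨hc, hca.trans hab⟩)))]
        exact h₁.add_right_of_add_left h₂

theorem forall_comparable_arc_zero_iff (hF : F ≤ 𝓟 (openSimplex n)) :
    (∀ a : Fin (n + 1), 0 < a → Comparable F (arc 0 a) (arc a 0)) ↔ ∃ t, F ≤ 𝓝 t := by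
  have hratio (i : Fin n) : arc 0 i.succ / (arc 0 i.succ + arc i.succ 0) = fun t => t i := by
    ext t
    rw [arc_eq_one_sub (Fin.succ_ne_zero i), add_sub_cancel, div_one, arc_of_le (Fin.zero_le _),
      ext0_zero, sub_zero, ext0, Fin.cons_succ]
  have hiff (i : Fin n) : Comparable F (arc 0 i.succ) (arc i.succ 0) ↔
      ∃ c, Tendsto (fun t : Fin n → ℝ => t i) F (𝓝 c) := by
    rw [Comparable.iff_exists_tendsto_div_add (eventually_arc_pos hF (Fin.succ_ne_zero i).symm)
      (eventually_arc_pos hF (Fin.succ_ne_zero i)), hratio]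
  simp only [Fin.forall_fin_succ, lt_self_iff_false, IsEmpty.forall_iff, true_and, Fin.succ_pos,
    forall_const, hiff]
  exact exists_tendsto_pi_nhds_iff.symm

theorem exists_tendsto_sTilde_iff (hF : F ≤ 𝓟 (openSimplex n)) (q : TripleIdx n) :
    (∃ c, Tendsto (fun t => sTilde n t q) F (𝓝 c)) ↔
      Comparable F (fun t => Real.sin (Real.pi * arc q.1.1 q.1.2.1 t))
        (fun t => Real.sin (Real.pi * arc q.1.1 q.1.2.2 t)) := by
  have hpos {a b : Fin (n + 1)} (h : a ≠ b) :
      ∀ᶠ t in F, 0 < Real.sin (Real.pi * arc a b t) := by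
    filter_upwards [le_principal_iff.1 hF] with t ht
      using sin_pi_mul_pos (arc_pos ht h) (arc_lt_one ht h)
  have hsTilde : ∀ᶠ t in F, sTilde n t q =
      ENNReal.ofReal (Real.sin (Real.pi * arc q.1.1 q.1.2.1 t)) /
        ENNReal.ofReal (Real.sin (Real.pi * arc q.1.1 q.1.2.2 t)) := by
    filter_upwards [le_principal_iff.1 hF] with t ht
    rw [sTilde, abs_sin_pi_mul_ext0_sub ht q.2.1, abs_sin_pi_mul_ext0_sub ht q.2.2.1]
  rw [Comparable.iff_exists_tendsto_ofReal_div (hpos q.2.1) (hpos q.2.2.1)]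
  simp only [tendsto_congr' hsTilde]

theorem exists_tendsto_sTilde_iff_of_le_nhds [F.NeBot] (hF : F ≤ 𝓟 (openSimplex n))
    (ht : F ≤ 𝓝 t) (q : TripleIdx n) :
    (∃ c, Tendsto (fun t => sTilde n t q) F (𝓝 c)) ↔
      Comparable F (arc q.1.1 q.1.2.1 * arc q.1.2.1 q.1.1)
        (arc q.1.1 q.1.2.2 * arc q.1.2.2 q.1.1) := by
  rw [exists_tendsto_sTilde_iff hF, comparable_sin_pi_mul_iff
    (tendsto_arc ht _ _) (arc_mem_Icc_of_le_nhds hF ht q.2.1)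
    (tendsto_arc ht _ _) (arc_mem_Icc_of_le_nhds hF ht q.2.2.1),
    arc_eq_one_sub q.2.1.symm, arc_eq_one_sub q.2.2.1.symm]

theorem ArcsComparable.comparable_mul_of_sbtw (h : ArcsComparable F) (habc : sbtw a b c) :
    Comparable F (arc b a * arc a b) (arc b c * arc c b) := by
  have hbca := sbtw_cyclic_left habc
  have hcab := sbtw_cyclic_left hbca
  rw [← arc_add_arc hbca, ← arc_add_arc hcab, mul_comm]
  exact .mul_add_of_pairwise (h a b c habc) (h b c a hbca) (h c a b hcab)

theorem forall_exists_tendsto_sTilde_iff [F.NeBot] (hF : F ≤ 𝓟 (openSimplex n))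
    (ht : F ≤ 𝓝 t) :
    (∀ q, ∃ c, Tendsto (fun t => sTilde n t q) F (𝓝 c)) ↔ ArcsComparable F := by
  simp only [exists_tendsto_sTilde_iff_of_le_nhds hF ht]
  constructor
  · intro h a b c habc
    obtain ⟨hab, hbc, hac⟩ : a ≠ b ∧ b ≠ c ∧ a ≠ c := by grind [Fin.sbtw_iff]
    have hmul := h ⟨(b, a, c), hab.symm, hbc, hac⟩
    rw [mul_comm, arc_eq_one_sub hab.symm, arc_eq_one_sub hbc.symm] at hmul
    exact .of_mul_one_sub (eventually_arc_pos hF hab) (eventually_arc_pos hF hbc)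
      (tendsto_arc ht a b) (tendsto_arc ht b c) hmul
  · rintro h ⟨⟨k, l, m⟩, hkl, hkm, hlm⟩
    obtain hlkm | hmkl : sbtw l k m ∨ sbtw m k l := by grind [Fin.sbtw_iff]
    · exact h.comparable_mul_of_sbtw hlkm
    · exact (h.comparable_mul_of_sbtw hmkl).symm

theorem exists_tendsto_betaMap_iff [F.NeBot] (hF : F ≤ 𝓟 (openSimplex n)) :
    (∃ a, Tendsto (betaMap n) F (𝓝 a)) ↔ (∃ t, F ≤ 𝓝 t) ∧ ArcsComparable F := by
  rw [← exists_and_right]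
  refine exists_tendsto_prodMk_nhds_iff.trans ?_
  rw [← exists_and_right, exists_tendsto_pi_nhds_iff]
  exact exists_congr fun t => and_congr_right fun ht => forall_exists_tendsto_sTilde_iff hF ht

theorem forall_triIdx_iff {p : TriIdx n → Prop} :
    (∀ q, p q) ↔
      (∀ (a b c : Fin (n + 1)) (hab : a < b) (hbc : b < c),
        p ⟨(a.castSucc, b.castSucc, c.castSucc), hab, hbc⟩) ∧
      ∀ (a b : Fin (n + 1)) (hab : a < b),
        p ⟨(a.castSucc, b.castSucc, Fin.last _), hab, b.castSucc_lt_last⟩ := by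
  refine ⟨fun h => ⟨fun _ _ _ _ _ => h _, fun _ _ _ => h _⟩, ?_⟩
  rintro ⟨hinner, hlast⟩ ⟨⟨i, j, k⟩, hij, hjk⟩
  obtain ⟨b, rfl⟩ := Fin.exists_castSucc_eq.2 (Fin.ne_last_of_lt hjk)
  obtain ⟨a, rfl⟩ := Fin.exists_castSucc_eq.2 (Fin.ne_last_of_lt hij)
  cases k using Fin.lastCases with
  | last => exact hlast a b hij
  | cast c => exact hinner a b c hij hjk

theorem alphaMap_castSucc (hab : a < b) (hbc : b < c) :
    (fun t => alphaMap n t ⟨(a.castSucc, b.castSucc, c.castSucc), hab, hbc⟩) =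
      arc a b / (arc a b + arc b c) := by
  rw [arc_add_arc (Fin.sbtw_iff.2 (.inl ⟨hab, hbc⟩))]
  ext t
  simp only [alphaMap, ext01_castSucc, Pi.div_apply, arc_of_le hab.le,
    arc_of_le (hab.trans hbc).le]

theorem alphaMap_last (hab : a < b) :
    (fun t => alphaMap n t ⟨(a.castSucc, b.castSucc, Fin.last _), hab, b.castSucc_lt_last⟩) =
      arc a b / (arc a b + arc b 0) := by
  ext t
  simp only [alphaMap, ext01_castSucc, ext01_last, Pi.div_apply, Pi.add_apply, arc_of_le hab.le,
    arc_of_lt (a.zero_le.trans_lt hab), ext0_zero]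
  ring

theorem exists_tendsto_alphaMap_iff (hF : F ≤ 𝓟 (openSimplex n)) :
    (∃ s, Tendsto (alphaMap n) F (𝓝 s)) ↔
      (∀ a b c : Fin (n + 1), a < b → b < c → Comparable F (arc a b) (arc b c)) ∧
      ∀ a b : Fin (n + 1), a < b → Comparable F (arc a b) (arc b 0) := by
  rw [exists_tendsto_pi_nhds_iff, forall_triIdx_iff]
  refine and_congr (forall₅_congr fun a b c hab hbc => ?_) (forall₃_congr fun a b hab => ?_)
  · rw [alphaMap_castSucc hab hbc, ← Comparable.iff_exists_tendsto_div_add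
      (eventually_arc_pos hF hab.ne) (eventually_arc_pos hF hbc.ne)]
  · rw [alphaMap_last hab, ← Comparable.iff_exists_tendsto_div_add
      (eventually_arc_pos hF hab.ne) (eventually_arc_pos hF (a.zero_le.trans_lt hab).ne')]

theorem forall_pairIdx'_iff {p : PairIdx' n → Prop} :
    (∀ q, p q) ↔ ∀ (a b : Fin (n + 1)) (ha : 0 < a) (hab : a < b),
      p ⟨(a, b), ha, hab, Nat.lt_succ_iff.1 b.2⟩ :=
  ⟨fun h _ _ _ _ => h _, fun h ⟨⟨i, j⟩, hi, hij, hj⟩ =>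
    h ⟨i, by omega⟩ ⟨j, by omega⟩ hi hij⟩

theorem exists_tendsto_gammaPrimeMap_snd_iff (hF : F ≤ 𝓟 (openSimplex n)) :
    (∃ r, Tendsto (fun t => (gammaPrimeMap n t).2) F (𝓝 r)) ↔
      ∀ a b : Fin (n + 1), 0 < a → a < b → Comparable F (arc 0 a) (arc b 0) := by
  rw [exists_tendsto_pi_nhds_iff, forall_pairIdx'_iff]
  refine forall₄_congr fun a b ha hab => ?_
  have hb := ha.trans hab
  rw [Comparable.iff_exists_tendsto_ofReal_div (eventually_arc_pos hF ha.ne)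
    (eventually_arc_pos hF hb.ne')]
  have hnum (t : Fin n → ℝ) : arc 0 a t = ext01 t a.castSucc := by
    rw [arc_of_le ha.le, ext0_zero, sub_zero, ext01_castSucc]
  have hden (t : Fin n → ℝ) : arc b 0 t = 1 - ext01 t b.castSucc := by
    rw [arc_of_lt hb, ext0_zero, ext01_castSucc]
    ring
  simp only [hnum, hden]
  rfl

theorem exists_tendsto_gammaPrimeMap_iff (hF : F ≤ 𝓟 (openSimplex n)) :
    (∃ a, Tendsto (gammaPrimeMap n) F (𝓝 a)) ↔ (∃ t, F ≤ 𝓝 t) ∧ ArcsComparable F := by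
  refine exists_tendsto_prodMk_nhds_iff.trans ?_
  rw [exists_tendsto_alphaMap_iff hF]
  refine (and_congr_right' (exists_tendsto_gammaPrimeMap_snd_iff hF)).trans ?_
  rw [← forall_comparable_arc_zero_iff hF, arcsComparable_iff_forall_lt]
  constructor
  · rintro ⟨⟨hinner, hlast⟩, hends⟩
    exact ⟨hlast 0, hinner, fun a b _ => hlast a b, hends⟩
  · rintro ⟨hconv, hinner, hlast, hends⟩
    refine ⟨⟨hinner, fun a b hab => ?_⟩, hends⟩
    rcases (Fin.zero_le a).eq_or_lt with rfl | ha
    · exact hconv b hab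
    · exact hlast a b ha hab

end Configurations

/-- **Proposition 8.1.** The cyclohedron `Cycl_n` (the closure of `β_n(Δ^n)`) is
homeomorphic to the closure of `γ\'_n(Δ^n)` in `[0,1]^{T_n} × [0,+∞]^{P\'_n}`, by a
homeomorphism commuting with the two embeddings of `Δ^n`. -/
theorem cyclohedron_homeomorph_closure_gammaPrime (n : ℕ) (hn : 1 ≤ n) :
    ∃ G : ↥(Cycl n) ≃ₜ ↥(closure (gammaPrimeMap n '' openSimplex n)),
      ∀ t (ht : t ∈ openSimplex n),
        G ⟨betaMap n t, subset_closure (Set.mem_image_of_mem _ ht)⟩ =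
          ⟨gammaPrimeMap n t, subset_closure (Set.mem_image_of_mem _ ht)⟩ := by
  exact exists_homeomorph_closure_image fun _ _ hF =>
    (exists_tendsto_betaMap_iff hF).trans (exists_tendsto_gammaPrimeMap_iff hF).symm
end

section
/- For every n ≥ 1, let p : [0,1]^{T_n} × [0,+∞]^{Q_n} → [0,1]^{T_n} be the projection onto the first factor. Then p ∘ δ_n = α_n, p maps the permutohedron Perm_n onto the associahedron Assoc_n, and for every x ∈ Assoc_n the preimage p^{-1}(x) ∩ Perm_n is contractible. (Theorem 8.4 of the paper for the projection π''_n : Perm_n → Assoc_n.) -/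
open scoped ENNReal

open scoped ENNReal

/-- The index set `Q_n` of quadruples `0 ≤ i < j < k < ℓ ≤ n+1`. -/
abbrev QuadIdx (n : ℕ) : Type :=
  {p : Fin (n + 2) × Fin (n + 2) × Fin (n + 2) × Fin (n + 2) //
    p.1 < p.2.1 ∧ p.2.1 < p.2.2.1 ∧ p.2.2.1 < p.2.2.2}

/-- The map `δ_n : Δ^n → [0,1]^{T_n} × [0,+∞]^{Q_n}` with components
`α_n` and `r_{ijkℓ}(t) = (t_j − t_i)/(t_ℓ − t_k)` (conventions `t_0 = 0`,
`t_{n+1} = 1`). -/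
noncomputable def deltaMap (n : ℕ) (t : Fin n → ℝ) :
    (TriIdx n → ℝ) × (QuadIdx n → ℝ≥0∞) :=
  (alphaMap n t,
   fun q => ENNReal.ofReal (ext01 t q.1.2.1 - ext01 t q.1.1) /
     ENNReal.ofReal (ext01 t q.1.2.2.2 - ext01 t q.1.2.2.1))

/-- The `n`-dimensional permutohedron: the (leveled) compactification of `Δ^n` obtained
as the closure of `δ_n(Δ^n)`. -/
noncomputable def Perm (n : ℕ) : Set ((TriIdx n → ℝ) × (QuadIdx n → ℝ≥0∞)) :=
  closure (deltaMap n '' openSimplex n)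

/-!
In terms of the gap lengths `b m = t (m + 1) - t m`, the coordinates of `Perm n` amount to the
matrix of all ratios `b i / b j`, so that `Perm n` is the closure of the space of such matrices. A
point of `Assoc n` prescribes the share `b m / ∑ k ∈ I, b k` of each gap in each interval `I` of
gaps, which amounts to prescribing some of the ratios. After rescaling the gaps, the prescribed
ratios are all `1` or `0`, so it remains to contract the ratio matrices with entries `1` and `0` at
prescribed places.

A ratio matrix is determined by its cut coordinates: for every set `A` of indices, the largest scale
outside `A` divided by the smallest scale inside `A`, truncated at `1`. The number of scales
below that of `i`, made continuous, is a level of `i`, and levels give rise to cut coordinates as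
well. The straight line from the cut coordinates of a matrix to those of its levels respects the
prescribed entries, and the admissible levels form a convex set.
-/

open scoped NNReal Topology

section RatioSpace

variable {ι : Type*}

/-- The matrix of ratios of a family of scales. -/
noncomputable def ratioMatrix (b : ι → ℝ≥0) : ι → ι → ℝ≥0∞ := fun i j => ↑(b i / b j)

variable (ι) in
/-- The ratio matrices of the families of positive scales. -/
def finiteRatios : Set (ι → ι → ℝ≥0∞) :=
  ratioMatrix '' {b | ∀ i, b i ≠ 0}

variable (ι) in
/-- The compactification, by all ratios, of the space of families of positive scales up to a
common factor. -/
def ratioSpace : Set (ι → ι → ℝ≥0∞) := closure (finiteRatios ι)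

namespace ratioSpace

variable {ρ : ι → ι → ℝ≥0∞}

lemma induction_of_isClosed (hρ : ρ ∈ ratioSpace ι) {p : (ι → ι → ℝ≥0∞) → Prop}
    (hp : IsClosed {σ | p σ}) (h : ∀ b : ι → ℝ≥0, (∀ i, b i ≠ 0) → p (ratioMatrix b)) : p ρ :=
  closure_minimal (Set.image_subset_iff.2 h) hp hρ

lemma apply_self (hρ : ρ ∈ ratioSpace ι) (i : ι) : ρ i i = 1 :=
  induction_of_isClosed hρ (p := fun σ => σ i i = 1)
    (isClosed_eq (by fun_prop) (by fun_prop)) fun b hb => by simp [ratioMatrix, hb i]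

lemma inv_apply (hρ : ρ ∈ ratioSpace ι) (i j : ι) : (ρ i j)⁻¹ = ρ j i :=
  induction_of_isClosed hρ (p := fun σ => (σ i j)⁻¹ = σ j i)
    (isClosed_eq (by fun_prop) (by fun_prop)) fun b hb => by
      rw [ratioMatrix, ratioMatrix, ← ENNReal.coe_inv (div_ne_zero (hb i) (hb j)), inv_div]

lemma apply_mul_apply (hρ : ρ ∈ ratioSpace ι) {i j k : ι}
    (h₁ : ρ i j ≠ 0 ∨ ρ j k ≠ ∞) (h₂ : ρ j k ≠ 0 ∨ ρ i j ≠ ∞) : ρ i j * ρ j k = ρ i k := by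
  have : (𝓝[finiteRatios ι] ρ).NeBot := mem_closure_iff_nhdsWithin_neBot.1 hρ
  have hcoord (a c : ι) : Filter.Tendsto (fun σ : ι → ι → ℝ≥0∞ => σ a c) (𝓝[finiteRatios ι] ρ)
      (𝓝 (ρ a c)) := (continuous_apply_apply a c).continuousWithinAt
  refine tendsto_nhds_unique_of_eventuallyEq
    (ENNReal.Tendsto.mul (hcoord i j) h₁ (hcoord j k) h₂) (hcoord i k) ?_
  filter_upwards [self_mem_nhdsWithin]
  rintro _ ⟨b, hb, rfl⟩
  simp only [ratioMatrix]
  rw [← ENNReal.coe_mul, div_mul_div_cancel₀ (hb j)]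

lemma apply_ne_zero_or (hρ : ρ ∈ ratioSpace ι) (i j : ι) : ρ i j ≠ 0 ∨ ρ j i ≠ 0 := by
  rw [← inv_apply hρ i j, ENNReal.inv_ne_zero, ← not_and_or]
  rintro ⟨h, h'⟩
  exact ENNReal.zero_ne_top (h.symm.trans h')

lemma apply_le_apply (hρ : ρ ∈ ratioSpace ι) {i j : ι} (h : 1 ≤ ρ i j) (k : ι) :
    ρ j k ≤ ρ i k := by
  rcases eq_or_ne (ρ j k) 0 with h0 | h0
  · simp [h0]
  · rw [← apply_mul_apply hρ (Or.inl (zero_lt_one.trans_le h).ne') (Or.inl h0)]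
    exact le_mul_of_one_le_left' h

lemma apply_eq_zero_of_apply_eq_zero (hρ : ρ ∈ ratioSpace ι) {i j k : ι} (hik : ρ i k = 0)
    (hij : ρ i j ≠ 0) : ρ j k = 0 := by
  by_contra hjk
  have hmul := apply_mul_apply hρ (Or.inl hij) (Or.inl hjk)
  exact mul_ne_zero hij hjk (hmul.trans hik)

end ratioSpace

end RatioSpace

section CutCoordinates

variable {ι : Type*} [Fintype ι] [DecidableEq ι]

/-- The product of the coordinates of all cuts `A` separating `i ∈ A` from `j ∉ A`. -/
def cutProd (x : Finset ι → ℝ≥0) (i j : ι) : ℝ≥0 := ∏ A with i ∈ A ∧ j ∉ A, x A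

/-- The ratio matrix with cut coordinates `x`, where `x A` is the ratio of the largest scale
outside `A` to the smallest scale inside `A`. -/
noncomputable def cutRatio (x : Finset ι → ℝ≥0) : ι → ι → ℝ≥0∞ :=
  fun i j => cutProd x j i / cutProd x i j

variable (ι) in
/-- The cut coordinates for which the cuts across which scales become incomparable are nested.
For these `cutRatio` never takes the form `0 / 0`. -/
def nestedCuts : Set (Finset ι → ℝ≥0) := {x | IsChain (· ⊆ ·) {A | x A = 0}}

lemma cutProd_eq_one {x : Finset ι → ℝ≥0} {i j : ι} (h : ∀ A, i ∈ A → j ∉ A → x A = 1) :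
    cutProd x i j = 1 :=
  Finset.prod_eq_one fun A hA => by
    obtain ⟨hi, hj⟩ := (Finset.mem_filter.1 hA).2
    exact h A hi hj

lemma cutProd_eq_zero_iff {x : Finset ι → ℝ≥0} {i j : ι} :
    cutProd x i j = 0 ↔ ∃ A, i ∈ A ∧ j ∉ A ∧ x A = 0 := by
  simp [cutProd, Finset.prod_eq_zero_iff, and_assoc]

lemma cutProd_mul_cutProd {x : Finset ι → ℝ≥0} {i j k : ι}
    (hij : ∀ A, j ∈ A → i ∉ A → x A = 1) (hjk : ∀ A, k ∈ A → j ∉ A → x A = 1) :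
    cutProd x i j * cutProd x j k = cutProd x i k := by
  have h₁ : ∏ A with (i ∈ A ∧ k ∉ A) ∧ j ∉ A, x A = cutProd x i j :=
    Finset.prod_subset (fun A => by simp; tauto) fun A hA hA' => by
      simp only [Finset.mem_filter_univ] at hA hA'
      exact hjk A (by tauto) hA.2
  have h₂ : ∏ A with (i ∈ A ∧ k ∉ A) ∧ j ∈ A, x A = cutProd x j k :=
    Finset.prod_subset (fun A => by simp; tauto) fun A hA hA' => by
      simp only [Finset.mem_filter_univ] at hA hA'
      exact hij A hA.1 (by tauto)
  rw [← h₁, ← h₂, mul_comm, ← Finset.filter_filter (fun A => i ∈ A ∧ k ∉ A),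
    ← Finset.filter_filter (fun A => i ∈ A ∧ k ∉ A), Finset.prod_filter_mul_prod_filter_not,
    cutProd]

lemma cutProd_ne_zero_or {x : Finset ι → ℝ≥0} (hx : x ∈ nestedCuts ι) (i j : ι) :
    cutProd x i j ≠ 0 ∨ cutProd x j i ≠ 0 := by
  by_contra! h
  obtain ⟨A, hiA, hjA, hA⟩ := cutProd_eq_zero_iff.1 h.1
  obtain ⟨B, hjB, hiB, hB⟩ := cutProd_eq_zero_iff.1 h.2
  rcases hx.total hA hB with hAB | hBA
  · exact hiB (hAB hiA)
  · exact hjA (hBA hjB)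

lemma continuous_cutProd (i j : ι) : Continuous fun x : Finset ι → ℝ≥0 => cutProd x i j :=
  continuous_finsetProd _ fun A _ => continuous_apply A

lemma continuousAt_cutRatio {x : Finset ι → ℝ≥0} (hx : x ∈ nestedCuts ι) :
    ContinuousAt cutRatio x := by
  refine continuousAt_pi.2 fun i => continuousAt_pi.2 fun j => ?_
  exact ENNReal.Tendsto.div (ENNReal.tendsto_coe.2 (continuous_cutProd j i).continuousAt)
    (by simpa using cutProd_ne_zero_or hx j i)
    (ENNReal.tendsto_coe.2 (continuous_cutProd i j).continuousAt) (Or.inr ENNReal.coe_ne_top)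

lemma cutRatio_eq_one {x : Finset ι → ℝ≥0} {i j : ι} (h : ∀ A, (i ∈ A ↔ j ∉ A) → x A = 1) :
    cutRatio x i j = 1 := by
  rw [cutRatio, cutProd_eq_one fun A hj hi => h A (by tauto),
    cutProd_eq_one fun A hi hj => h A (by tauto), ENNReal.coe_one, div_one]

lemma cutRatio_eq_zero {x : Finset ι → ℝ≥0} {i j : ι} {A : Finset ι} (hi : i ∉ A) (hj : j ∈ A)
    (hA : x A = 0) : cutRatio x i j = 0 := by
  rw [cutRatio, cutProd_eq_zero_iff.2 ⟨A, hj, hi, hA⟩, ENNReal.coe_zero, ENNReal.zero_div]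

lemma cutRatio_mem_finiteRatios {x : Finset ι → ℝ≥0} (hx : ∀ A, x A ≠ 0) :
    cutRatio x ∈ finiteRatios ι := by
  have hne (s : Finset (Finset ι)) : ∏ A ∈ s, x A ≠ 0 := Finset.prod_ne_zero_iff.2 fun A _ => hx A
  refine ⟨fun i => ∏ A with i ∉ A, x A, fun i => hne _, ?_⟩
  have hsplit (i j : ι) :
      ∏ A with i ∉ A, x A = cutProd x j i * ∏ A with i ∉ A ∧ j ∉ A, x A := by
    rw [← Finset.prod_filter_mul_prod_filter_not _ (j ∈ ·), Finset.filter_filter,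
      Finset.filter_filter, cutProd]
    simp only [and_comm]
  funext i j
  simp only [ratioMatrix, cutRatio]
  have hcut : cutProd x i j ≠ 0 := hne _
  rw [hsplit i j, hsplit j i, ← ENNReal.coe_div hcut]
  simp only [and_comm (a := j ∉ _)]
  rw [mul_div_mul_right _ _ (hne _)]

lemma cutRatio_mem_ratioSpace {x : Finset ι → ℝ≥0} (hx : x ∈ nestedCuts ι) :
    cutRatio x ∈ ratioSpace ι := by
  have hlim : Filter.Tendsto (fun ε : ℝ≥0 => x ⊔ fun _ => ε) (𝓝[>] 0) (𝓝 x) := by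
    have hcont : Continuous fun ε : ℝ≥0 => x ⊔ fun _ => ε :=
      continuous_pi fun A => continuous_const.max continuous_id
    have h0 : (x ⊔ fun _ => 0) = x := sup_of_le_left fun A => zero_le
    simpa only [h0] using (hcont.tendsto 0).mono_left nhdsWithin_le_nhds
  refine mem_closure_of_tendsto ((continuousAt_cutRatio hx).tendsto.comp hlim) ?_
  filter_upwards [self_mem_nhdsWithin] with ε hε
  exact cutRatio_mem_finiteRatios fun A => (lt_sup_of_lt_right hε).ne'

/-- The cut coordinates of a matrix of ratios: the largest ratio of a scale outside `A` to a scale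
inside `A`, truncated at `1`. -/
noncomputable def cutCoord (M : ι → ι → ℝ≥0∞) (A : Finset ι) : ℝ≥0 :=
  ((A ×ˢ Aᶜ).sup fun p => min 1 (M p.2 p.1)).toNNReal

lemma cutSup_le_one (M : ι → ι → ℝ≥0∞) (A : Finset ι) :
    ((A ×ˢ Aᶜ).sup fun p => min 1 (M p.2 p.1)) ≤ 1 :=
  Finset.sup_le fun _ _ => min_le_left _ _

lemma coe_cutCoord (M : ι → ι → ℝ≥0∞) (A : Finset ι) :
    (cutCoord M A : ℝ≥0∞) = (A ×ˢ Aᶜ).sup fun p => min 1 (M p.2 p.1) :=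
  ENNReal.coe_toNNReal (ne_top_of_le_ne_top ENNReal.one_ne_top (cutSup_le_one M A))

lemma cutCoord_eq_one {M : ι → ι → ℝ≥0∞} {A : Finset ι} {i j : ι} (hi : i ∈ A) (hj : j ∉ A)
    (h : 1 ≤ M j i) : cutCoord M A = 1 := by
  rw [← ENNReal.coe_eq_one, coe_cutCoord]
  refine le_antisymm (cutSup_le_one M A) ?_
  exact Finset.le_sup_of_le (b := (i, j)) (by simp [hi, hj]) (by simp [h])

lemma cutCoord_eq_zero_iff {M : ι → ι → ℝ≥0∞} {A : Finset ι} :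
    cutCoord M A = 0 ↔ ∀ i ∈ A, ∀ j ∉ A, M j i = 0 := by
  rw [← ENNReal.coe_eq_zero, coe_cutCoord, ← bot_eq_zero, Finset.sup_eq_bot_iff]
  have hmin (a : ℝ≥0∞) : min 1 a = 0 ↔ a = 0 := by
    rw [← bot_eq_zero]
    exact min_eq_bot.trans (by simp)
  simp only [hmin, bot_eq_zero, Prod.forall, Finset.mem_product, Finset.mem_compl]
  grind

lemma continuous_cutCoord : Continuous (cutCoord : (ι → ι → ℝ≥0∞) → Finset ι → ℝ≥0) := by
  refine continuous_pi fun A => ?_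
  refine ENNReal.continuousOn_toNNReal.comp_continuous
    (Continuous.finset_sup_apply fun p _ => by fun_prop) fun M => ?_
  exact ne_top_of_le_ne_top ENNReal.one_ne_top (cutSup_le_one M A)

lemma cutCoord_mem_nestedCuts {M : ι → ι → ℝ≥0∞} (hM : ∀ i j, M i j ≠ 0 ∨ M j i ≠ 0) :
    cutCoord M ∈ nestedCuts ι := by
  intro A hA B hB _
  by_contra! h
  obtain ⟨i, hiA, hiB⟩ := Finset.not_subset.1 h.1
  obtain ⟨j, hjB, hjA⟩ := Finset.not_subset.1 h.2
  have hji := cutCoord_eq_zero_iff.1 hA i hiA j hjA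
  have hij := cutCoord_eq_zero_iff.1 hB j hjB i hiB
  exact (hM i j).elim (· hij) (· hji)

section RatioMatrix

variable {b : ι → ℝ≥0}

lemma cutCoord_ratioMatrix_eq_one (hb : ∀ i, b i ≠ 0) {A : Finset ι} {i j : ι} (h : b i ≤ b j)
    (hi : i ∈ A) (hj : j ∉ A) : cutCoord (ratioMatrix b) A = 1 :=
  cutCoord_eq_one hi hj <| by
    rw [ratioMatrix, ENNReal.one_le_coe_iff]
    exact (one_le_div (pos_iff_ne_zero.2 (hb i))).2 h

lemma cutProd_cutCoord_ratioMatrix_of_covBy (hb : ∀ i, b i ≠ 0) {i j : ι} (hji : b j < b i)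
    (hcov : ∀ k, b k ≤ b j ∨ b i ≤ b k) :
    cutProd (cutCoord (ratioMatrix b)) i j = b j / b i := by
  -- Every cut that separates `i` from `j`, other than this one, has coordinate `1`.
  set B : Finset ι := {k | b i ≤ b k} with hB
  have hiB : i ∈ B := by simp [hB]
  have hjB : j ∉ B := by simp [hB, hji]
  have hle : b j / b i ≤ 1 := div_le_one_of_le₀ hji.le zero_le
  rw [cutProd, Finset.prod_eq_single_of_mem B (by simp [hiB, hjB]), ← ENNReal.coe_inj,
    coe_cutCoord]
  · refine le_antisymm (Finset.sup_le fun p hp => min_le_of_right_le ?_)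
      (Finset.le_sup_of_le (b := (i, j)) (by simp [hiB, hjB]) (by simpa [ratioMatrix] using hle))
    simp only [hB, Finset.mem_product, Finset.mem_compl, Finset.mem_filter_univ] at hp
    exact ENNReal.coe_le_coe.2
      (div_le_div₀ zero_le ((hcov p.2).resolve_right hp.2) (pos_iff_ne_zero.2 (hb i)) hp.1)
  · intro A hA hAB
    obtain ⟨hiA, hjA⟩ := (Finset.mem_filter.1 hA).2
    by_cases hsub : A ⊆ B
    · obtain ⟨k, hkB, hkA⟩ := Finset.exists_of_ssubset (hsub.ssubset_of_ne hAB)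
      exact cutCoord_ratioMatrix_eq_one hb (by simpa [hB] using hkB) hiA hkA
    · obtain ⟨k, hkA, hkB⟩ := Finset.not_subset.1 hsub
      refine cutCoord_ratioMatrix_eq_one hb ((hcov k).resolve_right ?_) hkA hjA
      simpa [hB] using hkB

lemma cutProd_cutCoord_ratioMatrix (hb : ∀ i, b i ≠ 0) {i j : ι} (hji : b j ≤ b i) :
    cutProd (cutCoord (ratioMatrix b)) i j = b j / b i := by
  have : IsTrans ι fun k l => b l < b k := ⟨fun _ _ _ h h' => h'.trans h⟩
  have : Std.Irrefl fun k l : ι => b l < b k := ⟨fun k => lt_irrefl (b k)⟩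
  have hone {k l : ι} (h : b k ≤ b l) (A : Finset ι) (hk : k ∈ A) (hl : l ∉ A) :=
    cutCoord_ratioMatrix_eq_one hb h hk hl
  induction j using (Finite.wellFounded_of_trans_of_irrefl fun k l => b l < b k).induction with
  | _ j ih =>
    rcases hji.eq_or_lt with h | h
    · rw [h, div_self (hb i), cutProd_eq_one (hone h.ge)]
    obtain ⟨l, hl, hmin⟩ :=
      Finset.exists_min_image {k | b j < b k} b ⟨i, Finset.mem_filter_univ i |>.2 h⟩
    simp only [Finset.mem_filter_univ] at hl hmin
    rw [← cutProd_mul_cutProd (hone (hmin i h)) (hone hl.le), ih l hl (hmin i h),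
      cutProd_cutCoord_ratioMatrix_of_covBy hb hl fun k =>
        (le_or_gt (b k) (b j)).imp_right (hmin k), mul_comm, div_mul_div_cancel₀ (hb l)]

lemma cutRatio_cutCoord_ratioMatrix (hb : ∀ i, b i ≠ 0) :
    cutRatio (cutCoord (ratioMatrix b)) = ratioMatrix b := by
  have hone {k l : ι} (h : b k ≤ b l) : cutProd (cutCoord (ratioMatrix b)) k l = 1 :=
    cutProd_eq_one fun A => cutCoord_ratioMatrix_eq_one hb h
  funext i j
  rcases le_total (b i) (b j) with h | h
  · rw [cutRatio, hone h, cutProd_cutCoord_ratioMatrix hb h, ENNReal.coe_one, div_one, ratioMatrix]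
  · rw [cutRatio, hone h, cutProd_cutCoord_ratioMatrix hb h, ENNReal.coe_one, one_div,
      ← ENNReal.coe_inv (div_ne_zero (hb j) (hb i)), inv_div, ratioMatrix]

end RatioMatrix

lemma cutRatio_cutCoord {ρ : ι → ι → ℝ≥0∞} (hρ : ρ ∈ ratioSpace ι) :
    cutRatio (cutCoord ρ) = ρ := by
  have hcont : ContinuousOn (fun ρ : ι → ι → ℝ≥0∞ => cutRatio (cutCoord ρ)) (ratioSpace ι) :=
    fun ρ hρ => (ContinuousAt.comp
      (continuousAt_cutRatio (cutCoord_mem_nestedCuts (ratioSpace.apply_ne_zero_or hρ)))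
      continuous_cutCoord.continuousAt).continuousWithinAt
  refine Set.EqOn.of_subset_closure (s := finiteRatios ι) ?_ hcont continuousOn_id subset_closure
    subset_rfl hρ
  rintro _ ⟨b, hb, rfl⟩
  exact cutRatio_cutCoord_ratioMatrix hb

end CutCoordinates

section Contraction

open Set

lemma contractibleSpace_of_homotopic_id_comp {X Y : Type*} [TopologicalSpace X]
    [TopologicalSpace Y] [ContractibleSpace Y] {f : C(X, Y)} {g : C(Y, X)}
    (h : (ContinuousMap.id X).Homotopic (g.comp f)) : ContractibleSpace X := by
  rw [contractible_iff_id_nullhomotopic]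
  obtain ⟨x, hx⟩ := ((id_nullhomotopic Y).comp_left f).comp_right g
  exact ⟨x, h.trans hx⟩

lemma contractibleSpace_of_homotopyOn {X Y : Type*} [TopologicalSpace X] [TopologicalSpace Y]
    {S : Set X} {C : Set Y} [ContractibleSpace C] {f : X → Y} {g : Y → X}
    {H : unitInterval × X → X} (hf : ContinuousOn f S) (hfC : MapsTo f S C)
    (hg : ContinuousOn g C) (hgS : MapsTo g C S) (hH : ContinuousOn H (univ ×ˢ S))
    (hHS : ∀ s, ∀ x ∈ S, H (s, x) ∈ S) (hH₀ : ∀ x ∈ S, H (0, x) = x)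
    (hH₁ : ∀ x ∈ S, H (1, x) = g (f x)) : ContractibleSpace S := by
  let f' : C(S, C) := ⟨hfC.restrict f S C, hf.mapsToRestrict hfC⟩
  let g' : C(C, S) := ⟨hgS.restrict g C S, hg.mapsToRestrict hgS⟩
  let H' : C(unitInterval × S, S) :=
    ⟨fun p => ⟨H (p.1, p.2), hHS p.1 p.2 p.2.2⟩, Continuous.subtype_mk
      (hH.comp_continuous (by fun_prop) fun p => ⟨mem_univ _, p.2.2⟩) _⟩
  exact contractibleSpace_of_homotopic_id_comp (f := f') (g := g') ⟨⟨H', fun x =>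
    Subtype.ext (hH₀ x x.2), fun x => Subtype.ext (hH₁ x x.2)⟩⟩

lemma contractibleSpace_of_leftInvOn {X Y : Type*} [TopologicalSpace X] [TopologicalSpace Y]
    {S : Set X} {C : Set Y} [ContractibleSpace C] {f : X → Y} {g : Y → X}
    (hf : ContinuousOn f S) (hfC : MapsTo f S C) (hg : ContinuousOn g C) (hgS : MapsTo g C S)
    (hgf : LeftInvOn g f S) : ContractibleSpace S :=
  contractibleSpace_of_homotopyOn (H := Prod.snd) hf hfC hg hgS continuous_snd.continuousOn
    (fun _ _ hx => hx) (fun _ _ => rfl) fun _ hx => (hgf hx).symm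

variable {ι : Type*} {E Z : ι → ι → Prop}

variable (E Z) in
/-- The ratio matrices with entry `1` at the pairs in `E` and entry `0` at the pairs in `Z`. -/
def ratioFace : Set (ι → ι → ℝ≥0∞) :=
  {ρ ∈ ratioSpace ι | (∀ i j, E i j → ρ i j = 1) ∧ ∀ i j, Z i j → ρ i j = 0}

variable (E Z) in
/-- The assignments of levels that agree on the pairs in `E` and increase by at least `1` along the
pairs in `Z`. -/
def levelRegion : Set (ι → ℝ) :=
  {u | (∀ i j, E i j → u i = u j) ∧ ∀ i j, Z i j → u i + 1 ≤ u j}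

lemma convex_levelRegion : Convex ℝ (levelRegion E Z) := by
  rintro u ⟨hu, hu'⟩ v ⟨hv, hv'⟩ a b ha hb hab
  refine ⟨fun i j h => ?_, fun i j h => ?_⟩
  · simp [hu i j h, hv i j h]
  · simp only [Pi.add_apply, Pi.smul_apply, smul_eq_mul]
    nlinarith [hu' i j h, hv' i j h]

variable (E Z) in
/-- The cut coordinates of the ratio matrices in `ratioFace E Z`: no pair in `E` is separated by a
cut with coordinate other than `1`, and every pair in `Z` is separated, in the right order, by a cut
with coordinate `0`. -/
def cutFace : Set (Finset ι → ℝ≥0) :=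
  {x ∈ nestedCuts ι | (∀ i j, E i j → ∀ A, (i ∈ A ↔ j ∉ A) → x A = 1) ∧
    ∀ i j, Z i j → ∃ A, i ∉ A ∧ j ∈ A ∧ x A = 0}

lemma smul_add_smul_mem_cutFace {x y : Finset ι → ℝ≥0} (hx : x ∈ cutFace E Z)
    (hy : y ∈ cutFace E Z) (hxy : ∀ A, x A = 0 → y A = 0) {a b : ℝ≥0} (hab : a + b = 1) :
    a • x + b • y ∈ cutFace E Z := by
  refine ⟨?_, fun i j h A hA => ?_, fun i j h => ?_⟩
  · have hzero (A : Finset ι) (hA : (a • x + b • y) A = 0) : y A = 0 := by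
      rcases eq_or_ne b 0 with rfl | hb
      · obtain rfl : a = 1 := by simpa using hab
        exact hxy A (by simpa using hA)
      · simpa [hb] using (add_eq_zero.1 hA).2
    exact hy.1.mono hzero
  · simp [hx.2.1 i j h A hA, hy.2.1 i j h A hA, hab]
  · obtain ⟨A, hi, hj, hA⟩ := hx.2.2 i j h
    exact ⟨A, hi, hj, by simp [hA, hxy A hA]⟩

section

variable [Fintype ι]

/-- The level of `i` with respect to a ratio matrix, a bounded substitute for the logarithm of the
scale of `i` which increases by at least `1` when the scale becomes infinitely larger. -/
noncomputable def level (ρ : ι → ι → ℝ≥0∞) (i : ι) : ℝ := ∑ k, (min 1 (ρ i k)).toReal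

lemma continuous_level : Continuous (level : (ι → ι → ℝ≥0∞) → ι → ℝ) :=
  continuous_pi fun i => continuous_finsetSum _ fun k _ =>
    ENNReal.continuousOn_toReal.comp_continuous (by fun_prop) fun ρ => by simp

lemma level_le_level {ρ : ι → ι → ℝ≥0∞} (hρ : ρ ∈ ratioSpace ι) {i j : ι} (h : 1 ≤ ρ i j) :
    level ρ j ≤ level ρ i :=
  Finset.sum_le_sum fun k _ =>
    ENNReal.toReal_mono (by simp) (min_le_min_left 1 (ratioSpace.apply_le_apply hρ h k))

lemma level_add_one_le_level {ρ : ι → ι → ℝ≥0∞} (hρ : ρ ∈ ratioSpace ι) {i j : ι}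
    (h : ρ i j = 0) : level ρ i + 1 ≤ level ρ j := by
  have hji : 1 ≤ ρ j i := by simp [← ratioSpace.inv_apply hρ i j, h]
  have hnonneg (k : ι) : 0 ≤ (min 1 (ρ j k)).toReal - (min 1 (ρ i k)).toReal :=
    sub_nonneg.2 (ENNReal.toReal_mono (by simp)
      (min_le_min_left 1 (ratioSpace.apply_le_apply hρ hji k)))
  have hle := Finset.single_le_sum (fun k _ => hnonneg k) (Finset.mem_univ j)
  rw [Finset.sum_sub_distrib, ratioSpace.apply_self hρ, h] at hle
  simp only [min_self, ENNReal.toReal_one, zero_le, inf_of_le_right, ENNReal.toReal_zero,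
    sub_zero] at hle
  exact le_sub_iff_add_le'.1 hle

lemma level_mem_levelRegion {ρ : ι → ι → ℝ≥0∞} (hρ : ρ ∈ ratioFace E Z) :
    level ρ ∈ levelRegion E Z := by
  obtain ⟨hρ, hE, hZ⟩ := hρ
  refine ⟨fun i j h => ?_, fun i j h => level_add_one_le_level hρ (hZ i j h)⟩
  have hji : ρ j i = 1 := by rw [← ratioSpace.inv_apply hρ i j, hE i j h, inv_one]
  exact le_antisymm (level_le_level hρ hji.ge) (level_le_level hρ (hE i j h).ge)

/-- A substitute for the ratios of scales with levels `u`: it is at least `1` when the level does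
not increase from `i` to `j`, and `0` when it increases by `1 / (card ι + 1)` or more. -/
noncomputable def levelCloseness (u : ι → ℝ) (i j : ι) : ℝ≥0∞ :=
  ENNReal.ofReal (1 - (Fintype.card ι + 1) * (u j - u i))

lemma continuous_levelCloseness :
    Continuous (levelCloseness : (ι → ℝ) → ι → ι → ℝ≥0∞) :=
  continuous_pi fun i => continuous_pi fun j => ENNReal.continuous_ofReal.comp (by fun_prop)

lemma one_le_levelCloseness {u : ι → ℝ} {i j : ι} (h : u j ≤ u i) : 1 ≤ levelCloseness u i j := by
  rw [levelCloseness, ENNReal.one_le_ofReal]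
  nlinarith [Nat.cast_nonneg (α := ℝ) (Fintype.card ι)]

lemma levelCloseness_eq_zero {u : ι → ℝ} {i j : ι} (h : 1 ≤ (Fintype.card ι + 1) * (u j - u i)) :
    levelCloseness u i j = 0 :=
  ENNReal.ofReal_eq_zero.2 (sub_nonpos.2 h)

lemma levelCloseness_ne_zero_or (u : ι → ℝ) (i j : ι) :
    levelCloseness u i j ≠ 0 ∨ levelCloseness u j i ≠ 0 :=
  (le_total (u j) (u i)).imp (fun h => (zero_lt_one.trans_le (one_le_levelCloseness h)).ne')
    fun h => (zero_lt_one.trans_le (one_le_levelCloseness h)).ne'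

lemma exists_nat_le_card_forall_lt_or_add_one_le (v : ι → ℝ) :
    ∃ m ≤ Fintype.card ι, ∀ k, v k < m ∨ (m : ℝ) + 1 ≤ v k := by
  classical
  obtain ⟨m, hm, hm'⟩ := Finset.exists_mem_notMem_of_card_lt_card
    (s := Finset.univ.image fun k => ⌊v k⌋₊) (t := Finset.range (Fintype.card ι + 1))
    (by rw [Finset.card_range]; exact Nat.lt_succ_of_le Finset.card_image_le)
  refine ⟨m, Nat.lt_succ_iff.1 (Finset.mem_range.1 hm), fun k => ?_⟩
  by_contra! hk
  refine hm' (Finset.mem_image.2 ⟨k, Finset.mem_univ k, ?_⟩)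
  exact (Nat.floor_eq_iff (m.cast_nonneg.trans hk.1)).2 hk

lemma exists_levelCloseness_eq_zero {u : ι → ℝ} {i j : ι} (h : u i + 1 ≤ u j) :
    ∃ A : Finset ι, i ∉ A ∧ j ∈ A ∧ ∀ k ∈ A, ∀ l ∉ A, levelCloseness u l k = 0 := by
  classical
  -- Of the `card ι + 1` strips into which the levels from `u i` to `u j` are divided, one contains
  -- no level; the cut consists of the indices above it.
  set N : ℝ := Fintype.card ι + 1
  obtain ⟨m, hmN, hm⟩ := exists_nat_le_card_forall_lt_or_add_one_le fun k => N * (u j - u k)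
  replace hmN : (m : ℝ) + 1 ≤ N := by simpa [N] using hmN
  refine ⟨({k | N * (u j - u k) < m} : Finset ι), ?_, ?_, fun k hk l hl => ?_⟩
  · rw [Finset.mem_filter_univ, not_lt]
    nlinarith
  · refine (Finset.mem_filter_univ j).2 ((hm j).resolve_right fun hj => ?_)
    rw [sub_self, mul_zero] at hj
    linarith [m.cast_nonneg (α := ℝ)]
  · rw [Finset.mem_filter_univ] at hk hl
    exact levelCloseness_eq_zero (by linarith [(hm l).resolve_left hl])

variable [DecidableEq ι]

lemma cutRatio_mem_ratioFace {x : Finset ι → ℝ≥0} (hx : x ∈ cutFace E Z) :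
    cutRatio x ∈ ratioFace E Z := by
  refine ⟨cutRatio_mem_ratioSpace hx.1, fun i j h => cutRatio_eq_one (hx.2.1 i j h),
    fun i j h => ?_⟩
  obtain ⟨A, hi, hj, hA⟩ := hx.2.2 i j h
  exact cutRatio_eq_zero hi hj hA

lemma cutCoord_mem_cutFace {M : ι → ι → ℝ≥0∞} (hM : ∀ i j, M i j ≠ 0 ∨ M j i ≠ 0)
    (hE : ∀ i j, E i j → 1 ≤ M i j ∧ 1 ≤ M j i)
    (hZ : ∀ i j, Z i j → ∃ A : Finset ι, i ∉ A ∧ j ∈ A ∧ ∀ k ∈ A, ∀ l ∉ A, M l k = 0) :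
    cutCoord M ∈ cutFace E Z := by
  refine ⟨cutCoord_mem_nestedCuts hM, fun i j h A hA => ?_, fun i j h => ?_⟩
  · by_cases hi : i ∈ A
    · exact cutCoord_eq_one hi (hA.1 hi) (hE i j h).2
    · exact cutCoord_eq_one (not_not.1 (mt hA.2 hi)) hi (hE i j h).1
  · obtain ⟨A, hi, hj, hA⟩ := hZ i j h
    exact ⟨A, hi, hj, cutCoord_eq_zero_iff.2 hA⟩

lemma cutCoord_mem_cutFace_of_mem_ratioFace {ρ : ι → ι → ℝ≥0∞} (hρ : ρ ∈ ratioFace E Z) :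
    cutCoord ρ ∈ cutFace E Z := by
  obtain ⟨hρ, hE, hZ⟩ := hρ
  refine cutCoord_mem_cutFace (ratioSpace.apply_ne_zero_or hρ) (fun i j h => ?_) fun i j h => ?_
  · exact ⟨(hE i j h).ge, by rw [← ratioSpace.inv_apply hρ i j, hE i j h, inv_one]⟩
  · refine ⟨({k | ρ i k = 0} : Finset ι), by simp [ratioSpace.apply_self hρ], by simp [hZ i j h],
      fun k hk l hl => ?_⟩
    rw [Finset.mem_filter_univ] at hk hl
    exact ratioSpace.apply_eq_zero_of_apply_eq_zero hρ hk hl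

lemma cutCoord_levelCloseness_mem_cutFace {u : ι → ℝ} (hu : u ∈ levelRegion E Z) :
    cutCoord (levelCloseness u) ∈ cutFace E Z :=
  cutCoord_mem_cutFace (levelCloseness_ne_zero_or u)
    (fun i j h => ⟨one_le_levelCloseness (hu.1 i j h).ge, one_le_levelCloseness (hu.1 i j h).le⟩)
    fun i j h => exists_levelCloseness_eq_zero (hu.2 i j h)

lemma cutCoord_levelCloseness_level_eq_zero {ρ : ι → ι → ℝ≥0∞} (hρ : ρ ∈ ratioSpace ι)
    {A : Finset ι} (hA : cutCoord ρ A = 0) : cutCoord (levelCloseness (level ρ)) A = 0 := by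
  rw [cutCoord_eq_zero_iff] at hA ⊢
  refine fun k hk l hl => levelCloseness_eq_zero ?_
  nlinarith [level_add_one_le_level hρ (hA k hk l hl), Nat.cast_nonneg (α := ℝ) (Fintype.card ι)]

/-- The path of cut coordinates from those of `ρ` to those of its levels. -/
noncomputable def cutPath (s : unitInterval) (ρ : ι → ι → ℝ≥0∞) : Finset ι → ℝ≥0 :=
  unitInterval.toNNReal (unitInterval.symm s) • cutCoord ρ +
    unitInterval.toNNReal s • cutCoord (levelCloseness (level ρ))

lemma continuous_cutPath :
    Continuous fun p : unitInterval × (ι → ι → ℝ≥0∞) => cutPath p.1 p.2 := by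
  have hs : Continuous fun p : unitInterval × (ι → ι → ℝ≥0∞) => unitInterval.toNNReal p.1 :=
    unitInterval.toNNReal_continuous.comp continuous_fst
  have hs' : Continuous fun p : unitInterval × (ι → ι → ℝ≥0∞) =>
      unitInterval.toNNReal (unitInterval.symm p.1) :=
    unitInterval.toNNReal_continuous.comp (unitInterval.continuous_symm.comp continuous_fst)
  exact (hs'.smul (continuous_cutCoord.comp continuous_snd)).add
    (hs.smul (continuous_cutCoord.comp
      (continuous_levelCloseness.comp (continuous_level.comp continuous_snd))))

lemma cutPath_mem_cutFace {ρ : ι → ι → ℝ≥0∞} (hρ : ρ ∈ ratioFace E Z) (s : unitInterval) :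
    cutPath s ρ ∈ cutFace E Z :=
  smul_add_smul_mem_cutFace (cutCoord_mem_cutFace_of_mem_ratioFace hρ)
    (cutCoord_levelCloseness_mem_cutFace (level_mem_levelRegion hρ))
    (fun _ => cutCoord_levelCloseness_level_eq_zero hρ.1)
    (unitInterval.toNNReal_symm_add_toNNReal s)

end

lemma contractibleSpace_ratioFace [Finite ι] (hne : (ratioFace E Z).Nonempty) :
    ContractibleSpace (ratioFace E Z) := by
  classical
  have := Fintype.ofFinite ι
  have : ContractibleSpace (levelRegion E Z) :=
    convex_levelRegion.contractibleSpace (hne.imp' level fun _ => level_mem_levelRegion)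
  refine contractibleSpace_of_homotopyOn (C := levelRegion E Z) (f := level)
    (g := fun u => cutRatio (cutCoord (levelCloseness u)))
    (H := fun p => cutRatio (cutPath p.1 p.2)) continuous_level.continuousOn
    (fun _ => level_mem_levelRegion) (fun u hu => ?_)
    (fun u hu => cutRatio_mem_ratioFace (cutCoord_levelCloseness_mem_cutFace hu))
    (fun p hp => ?_) (fun s ρ hρ => cutRatio_mem_ratioFace (cutPath_mem_cutFace hρ s))
    (fun ρ hρ => ?_) fun ρ _ => ?_
  · exact ((continuousAt_cutRatio (cutCoord_levelCloseness_mem_cutFace hu).1).comp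
      (f := fun u => cutCoord (levelCloseness u))
      (continuous_cutCoord.comp continuous_levelCloseness).continuousAt).continuousWithinAt
  · exact ((continuousAt_cutRatio (cutPath_mem_cutFace hp.2 p.1).1).comp
      (f := fun p : unitInterval × (ι → ι → ℝ≥0∞) => cutPath p.1 p.2)
      continuous_cutPath.continuousAt).continuousWithinAt
  · simpa [cutPath] using cutRatio_cutCoord hρ.1
  · simp [cutPath]

end Contraction

section Share

variable {ι : Type*}

/-- The share of the scale `m` in the total scale of `I`, in terms of ratios. -/
noncomputable def share (ρ : ι → ι → ℝ≥0∞) (I : Finset ι) (m : ι) : ℝ≥0∞ := (∑ k ∈ I, ρ k m)⁻¹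

lemma continuous_share (I : Finset ι) (m : ι) :
    Continuous fun ρ : ι → ι → ℝ≥0∞ => share ρ I m :=
  (continuous_finsetSum _ fun k _ => by fun_prop).inv

lemma sum_share_ratioMatrix {b : ι → ℝ≥0} (hb : ∀ i, b i ≠ 0) (I : Finset ι) {J : Finset ι}
    (hJ : J.Nonempty) :
    ∑ m ∈ I, share (ratioMatrix b) J m = ↑((∑ k ∈ I, b k) / ∑ k ∈ J, b k) := by
  have hsum : ∑ k ∈ J, b k ≠ 0 := by
    obtain ⟨j, hj⟩ := hJ
    exact fun h => hb j (Finset.sum_eq_zero_iff.1 h j hj)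
  have hshare (m : ι) : share (ratioMatrix b) J m = ↑(b m / ∑ k ∈ J, b k) := by
    simp only [share, ratioMatrix]
    rw [← ENNReal.ofNNReal_finsetSum, ← Finset.sum_div,
      ← ENNReal.coe_inv (div_ne_zero hsum (hb m)), inv_div]
  simp only [hshare]
  rw [← ENNReal.ofNNReal_finsetSum, Finset.sum_div]

lemma sum_share_self {ρ : ι → ι → ℝ≥0∞} (hρ : ρ ∈ ratioSpace ι) {I : Finset ι}
    (hI : I.Nonempty) : ∑ m ∈ I, share ρ I m = 1 :=
  ratioSpace.induction_of_isClosed hρ (p := fun σ => ∑ m ∈ I, share σ I m = 1)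
    (isClosed_eq (continuous_finsetSum _ fun m _ => continuous_share I m) continuous_const)
    fun b hb => by
      obtain ⟨i, hi⟩ := hI
      rw [sum_share_ratioMatrix hb I ⟨i, hi⟩, div_self, ENNReal.coe_one]
      exact fun h => hb i (Finset.sum_eq_zero_iff.1 h i hi)

lemma share_ne_top {ρ : ι → ι → ℝ≥0∞} (hρ : ρ ∈ ratioSpace ι) {I : Finset ι} {m : ι}
    (hm : m ∈ I) : share ρ I m ≠ ∞ := by
  rw [share, ENNReal.inv_ne_top]
  intro h
  exact one_ne_zero ((ratioSpace.apply_self hρ m).symm.trans (Finset.sum_eq_zero_iff.1 h m hm))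

lemma apply_ne_top_of_share_ne_zero {ρ : ι → ι → ℝ≥0∞} {I : Finset ι} {i j : ι} (hi : i ∈ I)
    (h : share ρ I j ≠ 0) : ρ i j ≠ ∞ :=
  ENNReal.sum_ne_top.1 (ENNReal.inv_ne_zero.1 h) i hi

lemma share_eq_zero {ρ : ι → ι → ℝ≥0∞} (hρ : ρ ∈ ratioSpace ι) {I : Finset ι} {i j : ι}
    (hj : j ∈ I) (h : ρ i j = 0) : share ρ I i = 0 := by
  rw [share, ENNReal.inv_eq_zero, ENNReal.sum_eq_top]
  exact ⟨j, hj, by rw [← ratioSpace.inv_apply hρ i j, h, ENNReal.inv_zero]⟩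

lemma share_eq_apply_mul_share {ρ : ι → ι → ℝ≥0∞} (hρ : ρ ∈ ratioSpace ι) {I : Finset ι}
    {i j : ι} (hi : i ∈ I) (hj : j ∈ I) (h : share ρ I j ≠ 0) :
    share ρ I i = ρ i j * share ρ I j := by
  rcases eq_or_ne (ρ i j) 0 with h0 | h0
  · rw [share_eq_zero hρ hj h0, h0, zero_mul]
  obtain ⟨hji, hji'⟩ : ρ j i ≠ 0 ∧ ρ j i ≠ ∞ := by
    rw [← ratioSpace.inv_apply hρ i j, ENNReal.inv_ne_zero, ENNReal.inv_ne_top]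
    exact ⟨apply_ne_top_of_share_ne_zero hi h, h0⟩
  have hsum : ∑ k ∈ I, ρ k i = (∑ k ∈ I, ρ k j) * ρ j i := by
    rw [Finset.sum_mul]
    exact Finset.sum_congr rfl fun k _ =>
      (ratioSpace.apply_mul_apply hρ (Or.inr hji') (Or.inl hji)).symm
  rw [share, hsum, ENNReal.mul_inv (Or.inr hji') (Or.inr hji), ratioSpace.inv_apply hρ, mul_comm,
    share]

/-- The ratio matrices with the same shares as `ρ₀` for a family of subsets. -/
def shareFiber (F : Set (Finset ι)) (ρ₀ : ι → ι → ℝ≥0∞) : Set (ι → ι → ℝ≥0∞) :=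
  {ρ ∈ ratioSpace ι | ∀ I ∈ F, ∀ m ∈ I, share ρ I m = share ρ₀ I m}

/-- The pairs of indices whose ratio can be recovered from the shares of `ρ₀`. -/
def ShareDetermined (F : Set (Finset ι)) (ρ₀ : ι → ι → ℝ≥0∞) (i j : ι) : Prop :=
  ∃ I ∈ F, i ∈ I ∧ j ∈ I ∧ share ρ₀ I j ≠ 0

lemma ShareDetermined.ne_top {F : Set (Finset ι)} {ρ₀ : ι → ι → ℝ≥0∞} {i j : ι}
    (h : ShareDetermined F ρ₀ i j) : ρ₀ i j ≠ ∞ := by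
  obtain ⟨I, -, hi, -, h⟩ := h
  exact apply_ne_top_of_share_ne_zero hi h

lemma mem_shareFiber_iff {F : Set (Finset ι)} {ρ₀ ρ : ι → ι → ℝ≥0∞} (hρ₀ : ρ₀ ∈ ratioSpace ι)
    (hρ : ρ ∈ ratioSpace ι) :
    ρ ∈ shareFiber F ρ₀ ↔ ∀ i j, ShareDetermined F ρ₀ i j → ρ i j = ρ₀ i j := by
  constructor
  · rintro ⟨-, hshare⟩ i j ⟨I, hI, hi, hj, h⟩
    have h₀ := share_eq_apply_mul_share hρ₀ hi hj h
    have h₁ := share_eq_apply_mul_share hρ hi hj (by rwa [hshare I hI j hj])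
    rw [hshare I hI i hi, hshare I hI j hj, h₀] at h₁
    exact ((ENNReal.mul_left_inj h (share_ne_top hρ₀ hj)).1 h₁).symm
  · refine fun hdet => ⟨hρ, fun I hI m hm => ?_⟩
    by_cases h : share ρ₀ I m = 0
    · obtain ⟨j, hj, hj0⟩ : ∃ j ∈ I, share ρ₀ I j ≠ 0 := by
        by_contra! hzero
        simpa [Finset.sum_eq_zero hzero] using sum_share_self hρ₀ ⟨m, hm⟩
      have hmj := share_eq_apply_mul_share hρ₀ hm hj hj0
      rw [h, eq_comm, mul_eq_zero, or_iff_left hj0, ← hdet m j ⟨I, hI, hm, hj, hj0⟩] at hmj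
      rw [h, share_eq_zero hρ hj hmj]
    · rw [share, share, Finset.sum_congr rfl fun k hk => hdet k m ⟨I, hI, hk, hm, h⟩]

/-- The ratio matrix obtained by multiplying the scales by a family of factors. -/
noncomputable def rescale (c : ι → ℝ≥0) (ρ : ι → ι → ℝ≥0∞) : ι → ι → ℝ≥0∞ :=
  fun i j => ↑(c i / c j) * ρ i j

lemma continuous_rescale (c : ι → ℝ≥0) : Continuous (rescale c) :=
  continuous_pi fun i => continuous_pi fun j =>
    (ENNReal.continuous_const_mul ENNReal.coe_ne_top).comp (continuous_apply_apply i j)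

lemma rescale_mem_ratioSpace {c : ι → ℝ≥0} (hc : ∀ i, c i ≠ 0) {ρ : ι → ι → ℝ≥0∞}
    (hρ : ρ ∈ ratioSpace ι) : rescale c ρ ∈ ratioSpace ι := by
  refine map_mem_closure (continuous_rescale c) hρ ?_
  rintro _ ⟨b, hb, rfl⟩
  refine ⟨c * b, fun i => mul_ne_zero (hc i) (hb i), ?_⟩
  funext i j
  rw [ratioMatrix, rescale, ratioMatrix, ← ENNReal.coe_mul, div_mul_div_comm]
  rfl

lemma rescale_rescale_inv {c : ι → ℝ≥0} (hc : ∀ i, c i ≠ 0) (ρ : ι → ι → ℝ≥0∞) :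
    rescale c (rescale c⁻¹ ρ) = ρ := by
  funext i j
  have hcancel : c i / c j * ((c i)⁻¹ / (c j)⁻¹) = 1 := by field_simp [hc i, hc j]
  rw [rescale, rescale, ← mul_assoc, ← ENNReal.coe_mul, Pi.inv_apply, Pi.inv_apply, hcancel,
    ENNReal.coe_one, one_mul]

/-- Two indices are equivalent if the ratio of their scales is neither `0` nor `∞`. -/
def ratioSpace.comparable {ρ : ι → ι → ℝ≥0∞} (hρ : ρ ∈ ratioSpace ι) : Setoid ι where
  r i j := ρ i j ≠ 0 ∧ ρ i j ≠ ∞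
  iseqv :=
    { refl i := by simp [apply_self hρ]
      symm {i j} h := by
        rw [← inv_apply hρ i j]
        exact ⟨ENNReal.inv_ne_zero.2 h.2, ENNReal.inv_ne_top.2 h.1⟩
      trans {i j k} h h' := by
        rw [← apply_mul_apply hρ (Or.inl h.1) (Or.inl h'.1)]
        exact ⟨mul_ne_zero h.1 h'.1, ENNReal.mul_ne_top h.2 h'.2⟩ }

lemma ratioSpace.exists_div_eq_apply {ρ : ι → ι → ℝ≥0∞} (hρ : ρ ∈ ratioSpace ι) :
    ∃ c : ι → ℝ≥0, (∀ i, c i ≠ 0) ∧ ∀ i j, ρ i j ≠ 0 → ρ i j ≠ ∞ → ↑(c i / c j) = ρ i j := by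
  let rep (i : ι) : ι := (Quotient.mk (comparable hρ) i).out
  have hrep (i : ι) : ρ i (rep i) ≠ 0 ∧ ρ i (rep i) ≠ ∞ :=
    (comparable hρ).symm (Quotient.mk_out (s := comparable hρ) i)
  have hc (i : ι) : (ρ i (rep i)).toNNReal ≠ 0 := (ENNReal.toNNReal_pos (hrep i).1 (hrep i).2).ne'
  refine ⟨fun i => (ρ i (rep i)).toNNReal, hc, fun i j h0 htop => ?_⟩
  have hij : rep i = rep j := congrArg Quotient.out (Quotient.sound ⟨h0, htop⟩)
  rw [ENNReal.coe_div (hc j), ENNReal.coe_toNNReal (hrep i).2, ENNReal.coe_toNNReal (hrep j).2,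
    hij, ← apply_mul_apply hρ (Or.inl h0) (Or.inl (hrep j).1),
    ENNReal.mul_div_cancel_right (hrep j).1 (hrep j).2]

lemma contractibleSpace_shareFiber [Finite ι] (F : Set (Finset ι)) {ρ₀ : ι → ι → ℝ≥0∞}
    (hρ₀ : ρ₀ ∈ ratioSpace ι) : ContractibleSpace (shareFiber F ρ₀) := by
  obtain ⟨c, hc, hcρ⟩ := ratioSpace.exists_div_eq_apply hρ₀
  have hc' (i : ι) : c⁻¹ i ≠ 0 := inv_ne_zero (hc i)
  let E (i j : ι) : Prop := ShareDetermined F ρ₀ i j ∧ ρ₀ i j ≠ 0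
  let Z (i j : ι) : Prop := ShareDetermined F ρ₀ i j ∧ ρ₀ i j = 0
  have hto : Set.MapsTo (rescale c⁻¹) (shareFiber F ρ₀) (ratioFace E Z) := by
    intro ρ hρ
    have hdet := (mem_shareFiber_iff hρ₀ hρ.1).1 hρ
    refine ⟨rescale_mem_ratioSpace hc' hρ.1, fun i j h => ?_, fun i j h => ?_⟩
    · have hcancel : c⁻¹ i / c⁻¹ j * (c i / c j) = 1 := by
        simp only [Pi.inv_apply]
        field_simp [hc i, hc j]
      rw [rescale, hdet i j h.1, ← hcρ i j h.2 h.1.ne_top, ← ENNReal.coe_mul, hcancel,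
        ENNReal.coe_one]
    · rw [rescale, hdet i j h.1, h.2, mul_zero]
  have hfrom : Set.MapsTo (rescale c) (ratioFace E Z) (shareFiber F ρ₀) := by
    intro ρ hρ
    refine (mem_shareFiber_iff hρ₀ (rescale_mem_ratioSpace hc hρ.1)).2 fun i j h => ?_
    by_cases h0 : ρ₀ i j = 0
    · rw [rescale, hρ.2.2 i j ⟨h, h0⟩, mul_zero, h0]
    · rw [rescale, hρ.2.1 i j ⟨h, h0⟩, mul_one, hcρ i j h0 h.ne_top]
  have := contractibleSpace_ratioFace ⟨_, hto ⟨hρ₀, fun _ _ _ _ => rfl⟩⟩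
  exact contractibleSpace_of_leftInvOn (continuous_rescale c⁻¹).continuousOn hto
    (continuous_rescale c).continuousOn hfrom fun ρ _ => rescale_rescale_inv hc ρ

end Share

section Configurations

variable {n : ℕ}

/-- The indices of the gaps between consecutive points which lie between the `i`th and the `k`th
point, where the `m`th gap is the one between the points `m` and `m + 1`. -/
def gapsBetween (i k : Fin (n + 2)) : Finset (Fin (n + 1)) := {m | i ≤ m.castSucc ∧ m.castSucc < k}

lemma mem_gapsBetween {i k : Fin (n + 2)} {m : Fin (n + 1)} :
    m ∈ gapsBetween i k ↔ i ≤ m.castSucc ∧ m.castSucc < k :=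
  Finset.mem_filter_univ m

lemma gapsBetween_subset {i j k : Fin (n + 2)} (h : j ≤ k) :
    gapsBetween i j ⊆ gapsBetween i k := fun m hm => by
  rw [mem_gapsBetween] at hm ⊢
  exact ⟨hm.1, hm.2.trans_le h⟩

lemma gapsBetween_self (i : Fin (n + 2)) : gapsBetween i i = ∅ := by
  ext m
  simp [mem_gapsBetween]

lemma gapsBetween_zero_last : gapsBetween 0 (Fin.last (n + 1)) = Finset.univ := by
  ext m
  simp [mem_gapsBetween, Fin.castSucc_lt_last]

lemma gapsBetween_nonempty {i k : Fin (n + 2)} (h : i < k) : (gapsBetween i k).Nonempty :=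
  ⟨i.castPred (h.trans_le (Fin.le_last k)).ne, by simp [mem_gapsBetween, h]⟩

lemma sum_gapsBetween_succ {M : Type*} [AddCommMonoid M] (f : Fin (n + 1) → M) {i : Fin (n + 2)}
    {m : Fin (n + 1)} (h : i ≤ m.castSucc) :
    ∑ l ∈ gapsBetween i m.succ, f l = f m + ∑ l ∈ gapsBetween i m.castSucc, f l := by
  have hinsert : gapsBetween i m.succ = insert m (gapsBetween i m.castSucc) := by
    ext l
    simp only [mem_gapsBetween, Finset.mem_insert, Fin.le_def, Fin.lt_def, Fin.ext_iff,
      Fin.val_castSucc, Fin.val_succ] at h ⊢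
    omega
  rw [hinsert, Finset.sum_insert (by simp [mem_gapsBetween])]

lemma sum_gapsBetween_sub {G : Type*} [AddCommGroup G] (T : Fin (n + 2) → G) {i k : Fin (n + 2)}
    (h : i ≤ k) : ∑ m ∈ gapsBetween i k, (T m.succ - T m.castSucc) = T k - T i := by
  induction k using Fin.induction with
  | zero =>
    obtain rfl : i = 0 := le_antisymm h (Fin.zero_le i)
    simp [gapsBetween_self]
  | succ m ih =>
    rcases h.eq_or_lt with rfl | hlt
    · simp [gapsBetween_self]
    · have hle : i ≤ m.castSucc := Fin.le_castSucc_iff.2 hlt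
      rw [sum_gapsBetween_succ _ hle, ih hle, sub_add_sub_cancel]

lemma strictMono_ext01 {t : Fin n → ℝ} (ht : t ∈ openSimplex n) : StrictMono (ext01 t) := by
  obtain ⟨hmono, hpos, hlt⟩ := ht
  have hsnoc (m : Fin (n + 1)) : 0 < (Fin.snoc t 1 : Fin (n + 1) → ℝ) m := by
    induction m using Fin.lastCases with
    | last => simp
    | cast m => simpa using hpos m
  rw [Fin.strictMono_iff_lt_succ]
  intro m
  induction m using Fin.cases with
  | zero => simpa [ext01] using hsnoc 0
  | succ m =>
    rw [ext01, Fin.castSucc_succ, Fin.cons_succ, Fin.cons_succ, Fin.snoc_castSucc]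
    rcases Fin.eq_castSucc_or_eq_last m.succ with ⟨l, hl⟩ | hl
    · rw [hl, Fin.snoc_castSucc]
      refine hmono m l ?_
      rw [← Fin.castSucc_lt_castSucc_iff, ← hl]
      exact Fin.castSucc_lt_succ
    · rw [hl, Fin.snoc_last]
      exact hlt m

lemma exists_ext01_eq {T : Fin (n + 2) → ℝ} (hT : StrictMono T) (h0 : T 0 = 0)
    (h1 : T (Fin.last (n + 1)) = 1) : ∃ t ∈ openSimplex n, ext01 t = T := by
  refine ⟨fun i => T i.castSucc.succ,
    ⟨fun i j h => hT (by simpa using h), fun i => ?_, fun i => ?_⟩, ?_⟩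
  · rw [← h0]
    exact hT (Fin.succ_pos _)
  · rw [← h1]
    refine hT ?_
    rw [← Fin.succ_last, Fin.succ_lt_succ_iff]
    exact Fin.castSucc_lt_last i
  · funext k
    induction k using Fin.cases with
    | zero => simp [ext01, h0]
    | succ k =>
      induction k using Fin.lastCases with
      | last => simp [ext01, h1]
      | cast k => simp [ext01]

/-- The length of the gap between the points `m` and `m + 1` of a configuration. -/
noncomputable def gapLength (t : Fin n → ℝ) (m : Fin (n + 1)) : ℝ≥0 :=
  (ext01 t m.succ - ext01 t m.castSucc).toNNReal

lemma gapLength_ne_zero {t : Fin n → ℝ} (ht : t ∈ openSimplex n) (m : Fin (n + 1)) :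
    gapLength t m ≠ 0 :=
  (Real.toNNReal_pos.2 (sub_pos.2 (strictMono_ext01 ht Fin.castSucc_lt_succ))).ne'

lemma sum_gapLength {t : Fin n → ℝ} (ht : t ∈ openSimplex n) {i k : Fin (n + 2)} (h : i ≤ k) :
    ∑ m ∈ gapsBetween i k, gapLength t m = (ext01 t k - ext01 t i).toNNReal := by
  rw [← sum_gapsBetween_sub _ h, Real.toNNReal_sum_of_nonneg]
  · rfl
  · exact fun m _ => sub_nonneg.2 ((strictMono_ext01 ht).monotone Fin.castSucc_lt_succ.le)

lemma exists_ratioMatrix_gapLength_eq {ρ : Fin (n + 1) → Fin (n + 1) → ℝ≥0∞}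
    (hρ : ρ ∈ finiteRatios (Fin (n + 1))) :
    ∃ t ∈ openSimplex n, ratioMatrix (gapLength t) = ρ := by
  obtain ⟨b, hb, rfl⟩ := hρ
  have htot : 0 < ∑ m, b m :=
    Finset.sum_pos (fun m _ => pos_iff_ne_zero.2 (hb m)) Finset.univ_nonempty
  let T (k : Fin (n + 2)) : ℝ := ↑((∑ m ∈ gapsBetween 0 k, b m) / ∑ m, b m)
  have hstep (m : Fin (n + 1)) : T m.succ - T m.castSucc = ↑(b m / ∑ m, b m) := by
    simp only [T]
    rw [sum_gapsBetween_succ _ (Fin.zero_le _), add_div, NNReal.coe_add, add_sub_cancel_right]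
  have hmono : StrictMono T := Fin.strictMono_iff_lt_succ.2 fun m =>
    sub_pos.1 (by rw [hstep]; exact NNReal.coe_pos.2 (div_pos (pos_iff_ne_zero.2 (hb m)) htot))
  obtain ⟨t, ht, hT⟩ := exists_ext01_eq hmono (by simp [T, gapsBetween_self])
    (by simp only [T, gapsBetween_zero_last, div_self htot.ne', NNReal.coe_one])
  refine ⟨t, ht, ?_⟩
  have hgap (m : Fin (n + 1)) : gapLength t m = b m / ∑ m, b m := by
    rw [gapLength, hT, hstep, Real.toNNReal_coe]
  funext i j
  rw [ratioMatrix, hgap, hgap, div_div_div_cancel_right₀ htot.ne', ratioMatrix]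

/-- The point of the product of `[0,1]^{T_n}` and `[0,∞]^{Q_n}` with gap length ratios `ρ`: its
coordinates are `∑_{i ≤ m < j} b m / ∑_{i ≤ l < k} b l` and `∑_{i ≤ m < j} b m / ∑_{k ≤ l < ℓ} b l`
in terms of the gap lengths `b`. -/
noncomputable def ofGapRatios (ρ : Fin (n + 1) → Fin (n + 1) → ℝ≥0∞) :
    (TriIdx n → ℝ) × (QuadIdx n → ℝ≥0∞) :=
  (fun q => (∑ m ∈ gapsBetween q.1.1 q.1.2.1, share ρ (gapsBetween q.1.1 q.1.2.2) m).toReal,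
   fun q => ∑ m ∈ gapsBetween q.1.1 q.1.2.1, share ρ (gapsBetween q.1.2.2.1 q.1.2.2.2) m)

lemma ofGapRatios_ratioMatrix_gapLength {t : Fin n → ℝ} (ht : t ∈ openSimplex n) :
    ofGapRatios (ratioMatrix (gapLength t)) = deltaMap n t := by
  have hmono := strictMono_ext01 ht
  refine Prod.ext (funext fun q => ?_) (funext fun q => ?_)
  · have hik := q.2.1.trans q.2.2
    simp only [ofGapRatios, deltaMap, alphaMap]
    rw [sum_share_ratioMatrix (gapLength_ne_zero ht) _ (gapsBetween_nonempty hik),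
      sum_gapLength ht q.2.1.le, sum_gapLength ht hik.le, ENNReal.coe_toReal, NNReal.coe_div,
      Real.coe_toNNReal _ (sub_nonneg.2 (hmono q.2.1).le),
      Real.coe_toNNReal _ (sub_nonneg.2 (hmono hik).le)]
  · have hpos := Real.toNNReal_pos.2 (sub_pos.2 (hmono q.2.2.2))
    simp only [ofGapRatios, deltaMap]
    rw [sum_share_ratioMatrix (gapLength_ne_zero ht) _ (gapsBetween_nonempty q.2.2.2),
      sum_gapLength ht q.2.1.le, sum_gapLength ht q.2.2.2.le, ENNReal.coe_div hpos.ne']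
    rfl

lemma sum_share_gapsBetween_ne_top {ρ : Fin (n + 1) → Fin (n + 1) → ℝ≥0∞}
    (hρ : ρ ∈ ratioSpace (Fin (n + 1))) {i j k : Fin (n + 2)} (h : j ≤ k) :
    ∑ m ∈ gapsBetween i j, share ρ (gapsBetween i k) m ≠ ∞ :=
  ENNReal.sum_ne_top.2 fun _ hm => share_ne_top hρ (gapsBetween_subset h hm)

lemma continuousOn_ofGapRatios :
    ContinuousOn (ofGapRatios (n := n)) (ratioSpace (Fin (n + 1))) := by
  have hsum (I J : Finset (Fin (n + 1))) : Continuous fun ρ => ∑ m ∈ I, share ρ J m :=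
    continuous_finsetSum _ fun m _ => continuous_share J m
  refine .prodMk (continuousOn_pi.2 fun q => ?_) (continuous_pi fun q => hsum _ _).continuousOn
  exact ENNReal.continuousOn_toReal.comp (hsum _ _).continuousOn fun ρ hρ =>
    sum_share_gapsBetween_ne_top hρ q.2.2.le

lemma ofGapRatios_mem_Perm {ρ : Fin (n + 1) → Fin (n + 1) → ℝ≥0∞}
    (hρ : ρ ∈ ratioSpace (Fin (n + 1))) : ofGapRatios ρ ∈ Perm n := by
  refine Set.MapsTo.closure_of_continuousOn (fun σ hσ => ?_) continuousOn_ofGapRatios hρ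
  obtain ⟨t, ht, rfl⟩ := exists_ratioMatrix_gapLength_eq hσ
  exact ⟨t, ht, (ofGapRatios_ratioMatrix_gapLength ht).symm⟩

/-- The ratio of the `a`th to the `b`th gap length for `a < b`. For adjacent gaps there is no
such coordinate in `Q_n`, and the ratio is recovered as `s / (1 - s)` from the coordinate
`s` in `T_n` of the three endpoints. -/
noncomputable def gapRatioOfLT (p : (TriIdx n → ℝ) × (QuadIdx n → ℝ≥0∞)) (a b : Fin (n + 1))
    (h : a < b) : ℝ≥0∞ :=
  if h' : a.succ < b.castSucc then
    p.2 ⟨(a.castSucc, a.succ, b.castSucc, b.succ),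
      Fin.castSucc_lt_succ, h', Fin.castSucc_lt_succ⟩
  else
    let s := p.1 ⟨(a.castSucc, a.succ, b.succ), Fin.castSucc_lt_succ, Fin.succ_lt_succ_iff.2 h⟩
    ENNReal.ofReal s / ENNReal.ofReal (1 - s)

/-- The matrix of ratios of gap lengths, in terms of the coordinates of `Perm n`. -/
noncomputable def gapRatios (p : (TriIdx n → ℝ) × (QuadIdx n → ℝ≥0∞)) (a b : Fin (n + 1)) :
    ℝ≥0∞ :=
  if h : a < b then gapRatioOfLT p a b h else if h : b < a then (gapRatioOfLT p b a h)⁻¹ else 1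

lemma continuous_ofReal_div_ofReal_one_sub :
    Continuous fun s : ℝ => ENNReal.ofReal s / ENNReal.ofReal (1 - s) := by
  refine continuous_iff_continuousAt.2 fun s => ENNReal.Tendsto.div
    (ENNReal.continuous_ofReal.tendsto s) ?_
    ((ENNReal.continuous_ofReal.comp (continuous_sub_left 1)).tendsto s)
    (Or.inr ENNReal.ofReal_ne_top)
  by_contra! hzero
  simp only [ENNReal.ofReal_eq_zero] at hzero
  linarith [hzero.1, hzero.2]

lemma continuous_gapRatioOfLT {a b : Fin (n + 1)} (h : a < b) :
    Continuous fun p : (TriIdx n → ℝ) × (QuadIdx n → ℝ≥0∞) => gapRatioOfLT p a b h := by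
  unfold gapRatioOfLT
  split_ifs with h'
  · fun_prop
  · exact continuous_ofReal_div_ofReal_one_sub.comp (by fun_prop)

lemma continuous_gapRatios : Continuous (gapRatios (n := n)) := by
  refine continuous_pi fun a => continuous_pi fun b => ?_
  unfold gapRatios
  split_ifs with h h'
  · exact continuous_gapRatioOfLT h
  · exact (continuous_gapRatioOfLT h').inv
  · exact continuous_const

lemma gapRatioOfLT_deltaMap {t : Fin n → ℝ} (ht : t ∈ openSimplex n) {a b : Fin (n + 1)}
    (h : a < b) : gapRatioOfLT (deltaMap n t) a b h = ↑(gapLength t a / gapLength t b) := by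
  have hmono := strictMono_ext01 ht
  rw [ENNReal.coe_div (gapLength_ne_zero ht b)]
  unfold gapRatioOfLT
  split_ifs with h'
  · rfl
  · have hab : a.succ = b.castSucc := le_antisymm (by
      simp only [Fin.le_def, Fin.val_succ, Fin.val_castSucc]
      exact Nat.succ_le_of_lt h) (not_lt.1 h')
    have hpos : 0 < ext01 t b.succ - ext01 t a.castSucc :=
      sub_pos.2 (hmono (Fin.castSucc_lt_succ.trans (Fin.succ_lt_succ_iff.2 h)))
    have hpos' : 0 < ext01 t b.succ - ext01 t a.succ :=
      sub_pos.2 (hmono (Fin.succ_lt_succ_iff.2 h))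
    simp only [deltaMap, alphaMap]
    rw [one_sub_div hpos.ne', sub_sub_sub_cancel_right,
      ← ENNReal.ofReal_div_of_pos (div_pos hpos' hpos), div_div_div_cancel_right₀ hpos.ne',
      ENNReal.ofReal_div_of_pos hpos', gapLength, gapLength, hab]
    rfl

lemma gapRatios_deltaMap {t : Fin n → ℝ} (ht : t ∈ openSimplex n) :
    gapRatios (deltaMap n t) = ratioMatrix (gapLength t) := by
  have hne := gapLength_ne_zero ht
  funext a b
  unfold gapRatios ratioMatrix
  split_ifs with h h'
  · exact gapRatioOfLT_deltaMap ht h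
  · rw [gapRatioOfLT_deltaMap ht h', ← ENNReal.coe_inv (div_ne_zero (hne b) (hne a)), inv_div]
  · obtain rfl : a = b := le_antisymm (not_lt.1 h') (not_lt.1 h)
    rw [div_self (hne a), ENNReal.coe_one]

lemma gapRatios_mem_ratioSpace {p : (TriIdx n → ℝ) × (QuadIdx n → ℝ≥0∞)} (hp : p ∈ Perm n) :
    gapRatios p ∈ ratioSpace (Fin (n + 1)) := by
  refine map_mem_closure continuous_gapRatios hp ?_
  rintro _ ⟨t, ht, rfl⟩
  exact ⟨_, gapLength_ne_zero ht, (gapRatios_deltaMap ht).symm⟩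

lemma ofGapRatios_gapRatios {p : (TriIdx n → ℝ) × (QuadIdx n → ℝ≥0∞)} (hp : p ∈ Perm n) :
    ofGapRatios (gapRatios p) = p := by
  refine Set.EqOn.of_subset_closure (s := deltaMap n '' openSimplex n) (t := Perm n)
    (f := fun p => ofGapRatios (gapRatios p)) (g := id) ?_
    (continuousOn_ofGapRatios.comp continuous_gapRatios.continuousOn fun p =>
      gapRatios_mem_ratioSpace)
    continuousOn_id subset_closure subset_rfl hp
  rintro _ ⟨t, ht, rfl⟩
  simp only [gapRatios_deltaMap ht, ofGapRatios_ratioMatrix_gapLength ht, id]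

lemma sum_share_eq_of_fst_ofGapRatios_eq {ρ σ : Fin (n + 1) → Fin (n + 1) → ℝ≥0∞}
    (hρ : ρ ∈ ratioSpace (Fin (n + 1))) (hσ : σ ∈ ratioSpace (Fin (n + 1)))
    (h : (ofGapRatios ρ).1 = (ofGapRatios σ).1) {i j k : Fin (n + 2)} (hij : i ≤ j) (hjk : j ≤ k) :
    ∑ m ∈ gapsBetween i j, share ρ (gapsBetween i k) m =
      ∑ m ∈ gapsBetween i j, share σ (gapsBetween i k) m := by
  rcases hij.eq_or_lt with rfl | hij
  · simp [gapsBetween_self]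
  rcases hjk.eq_or_lt with rfl | hjk
  · rw [sum_share_self hρ (gapsBetween_nonempty hij), sum_share_self hσ (gapsBetween_nonempty hij)]
  · exact (ENNReal.toReal_eq_toReal_iff' (sum_share_gapsBetween_ne_top hρ hjk.le)
      (sum_share_gapsBetween_ne_top hσ hjk.le)).1 (congrFun h ⟨(i, j, k), hij, hjk⟩)

variable (n) in
/-- The family of all sets of gaps between two distinct points. -/
def gapIntervals : Set (Finset (Fin (n + 1))) := {I | ∃ i k, i < k ∧ gapsBetween i k = I}

lemma mem_shareFiber_gapIntervals_iff {ρ₀ ρ : Fin (n + 1) → Fin (n + 1) → ℝ≥0∞}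
    (hρ₀ : ρ₀ ∈ ratioSpace (Fin (n + 1))) (hρ : ρ ∈ ratioSpace (Fin (n + 1))) :
    ρ ∈ shareFiber (gapIntervals n) ρ₀ ↔ (ofGapRatios ρ).1 = (ofGapRatios ρ₀).1 := by
  constructor
  · rintro ⟨-, h⟩
    funext q
    refine congrArg ENNReal.toReal (Finset.sum_congr rfl fun m hm => ?_)
    exact h _ ⟨_, _, q.2.1.trans q.2.2, rfl⟩ m (gapsBetween_subset q.2.2.le hm)
  · refine fun h => ⟨hρ, ?_⟩
    rintro _ ⟨i, k, -, rfl⟩ m hm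
    obtain ⟨him, hmk⟩ := mem_gapsBetween.1 hm
    have hsucc := sum_share_eq_of_fst_ofGapRatios_eq hρ hρ₀ h (him.trans Fin.castSucc_lt_succ.le)
      (Fin.castSucc_lt_iff_succ_le.1 hmk)
    rw [sum_gapsBetween_succ _ him, sum_gapsBetween_succ _ him,
      sum_share_eq_of_fst_ofGapRatios_eq hρ hρ₀ h him hmk.le] at hsucc
    exact (ENNReal.add_left_inj (sum_share_gapsBetween_ne_top hρ₀ hmk.le)).1 hsucc

lemma contractibleSpace_fiber_Perm {p₀ : (TriIdx n → ℝ) × (QuadIdx n → ℝ≥0∞)} (hp₀ : p₀ ∈ Perm n) :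
    ContractibleSpace ↥(Prod.fst ⁻¹' {p₀.1} ∩ Perm n) := by
  have hρ₀ := gapRatios_mem_ratioSpace hp₀
  have hfst : (ofGapRatios (gapRatios p₀)).1 = p₀.1 := by rw [ofGapRatios_gapRatios hp₀]
  have := contractibleSpace_shareFiber (gapIntervals n) hρ₀
  refine contractibleSpace_of_leftInvOn (C := shareFiber (gapIntervals n) (gapRatios p₀))
    continuous_gapRatios.continuousOn (fun p hp => ?_)
    (continuousOn_ofGapRatios.mono fun ρ hρ => hρ.1) (fun ρ hρ => ⟨?_, ofGapRatios_mem_Perm hρ.1⟩)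
    fun p hp => ofGapRatios_gapRatios hp.2
  · rw [mem_shareFiber_gapIntervals_iff hρ₀ (gapRatios_mem_ratioSpace hp.2), hfst,
      ofGapRatios_gapRatios hp.2]
    exact hp.1
  · exact ((mem_shareFiber_gapIntervals_iff hρ₀ hρ.1).1 hρ).trans hfst

lemma isCompact_Perm : IsCompact (Perm n) := by
  have hK : IsCompact ((Set.univ.pi fun _ : TriIdx n => Set.Icc (0 : ℝ) 1) ×ˢ
      (Set.univ : Set (QuadIdx n → ℝ≥0∞))) :=
    (isCompact_univ_pi fun _ => isCompact_Icc).prod isCompact_univ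
  refine hK.of_isClosed_subset isClosed_closure (closure_minimal ?_ hK.isClosed)
  rintro _ ⟨t, ht, rfl⟩
  refine ⟨fun q _ => ?_, Set.mem_univ _⟩
  have hij := strictMono_ext01 ht q.2.1
  have hjk := strictMono_ext01 ht q.2.2
  exact ⟨div_nonneg (by linarith) (by linarith), div_le_one_of_le₀ (by linarith) (by linarith)⟩

lemma image_fst_Perm : Prod.fst '' Perm n = Assoc n := by
  rw [Perm, image_closure_of_isCompact isCompact_Perm continuous_fst.continuousOn, Set.image_image]
  rfl

end Configurations

/-- **Theorem 8.4** (for the projection `π\'\'_n : Perm_n → Assoc_n`).  The projection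
`p` onto the first factor satisfies `p ∘ δ_n = α_n`, maps the permutohedron `Perm_n` onto
the associahedron `Assoc_n`, and the preimage in `Perm_n` of every point of `Assoc_n` is
contractible. -/
theorem permutohedron_projects_to_associahedron (n : ℕ) (hn : 1 ≤ n) :
    (∀ t ∈ openSimplex n, (deltaMap n t).1 = alphaMap n t) ∧
    Prod.fst '' Perm n = Assoc n ∧
    ∀ x ∈ Assoc n, ContractibleSpace ↥(Prod.fst ⁻¹' {x} ∩ Perm n) := by
  refine ⟨fun t _ => rfl, image_fst_Perm, fun x hx => ?_⟩
  rw [← image_fst_Perm] at hx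
  obtain ⟨p, hp, rfl⟩ := hx
  exact contractibleSpace_fiber_Perm hp
end
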